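/- arXiv:1503.07955 — 3 statements merged into one kernel-verified Lean document; each statement's English description precedes it below -/
import Mathlib

section
/- Corollary 2.3 (decomposition of the kernel when all but m source parameters coincide). Let 0 ≤ m < N, a > 0 and a₁,…,a_m > 0, and let K_N be the kernel with parameter list (a₁,…,a_m, a, …, a), the value a being repeated N−m times. For n ∈ ℕ and 1 ≤ k ≤ m define ℒ^{(k)}_n(x) := ∫₀^∞ u^{ν₀} e^{−u} Ψ(u;x) (u+a)^n ∏_{l=1}^{k−1}(u+a_l) du and ℒ̃^{(k)}_n(y) := (1/(2πi)) ∮_C e^{v} Φ(v;y) (v+a)^{−n} ∏_{l=1}^{k}(v+a_l)^{−1} dv, where C is a counterclockwise circle contained in {Re v < 0} enclosing −a, −a₁, …, −a_m. Then for all x, y > 0: K_N(x,y) = ∫₀^∞ [(1/(2πi)) ∮_C u^{ν₀} e^{−u+v} Ψ(u;x) Φ(v;y) (u−v)^{−1} ((u+a)/(v+a))^{N−m} dv] du + ∑_{k=1}^m ℒ^{(k)}_{N−m}(x) · ℒ̃^{(k)}_{N−m}(y). -/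
open MeasureTheory Filter Topology

noncomputable section


/-- Pochhammer symbol `(a)_j` over `ℝ`. -/
def poch (a : ℝ) (j : ℕ) : ℝ := ∏ i ∈ Finset.range j, (a + i)

/-- The hypergeometric function `₀F₁(b; z)` for complex argument `z`. -/
def hyp0F1 (b : ℝ) (z : ℂ) : ℂ :=
  ∑' k : ℕ, (Real.Gamma b : ℂ) * z ^ k /
    ((Nat.factorial k : ℂ) * (Real.Gamma (b + k) : ℂ))

/-- The hypergeometric function `₀F₁(b; z)` for real argument `z`. -/
def hyp0F1R (b z : ℝ) : ℝ :=
  ∑' k : ℕ, Real.Gamma b * z ^ k / (Nat.factorial k * Real.Gamma (b + k))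

/-- The terminating hypergeometric sum `₁F₁(-k; b; u)`. -/
def hyp1F1T (k : ℕ) (b u : ℝ) : ℝ :=
  ∑ j ∈ Finset.range (k + 1),
    poch (-(k : ℝ)) j / (poch b j * Nat.factorial j) * u ^ j

/-- The function `Ψ(u;x)` of the paper. -/
def Psi (r ν0 : ℕ) (ν : Fin r → ℕ) (u x : ℝ) : ℝ :=
  (1 / Real.Gamma ((ν0 : ℝ) + 1)) *
    ∑' k : ℕ, x ^ k / Nat.factorial k * hyp1F1T k ((ν0 : ℝ) + 1) u *
      ∏ l, 1 / Real.Gamma ((ν l : ℝ) + 1 + k)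

/-- The positive orthant in `ℝ^r`. -/
def posOrth (r : ℕ) : Set (Fin r → ℝ) := {t | ∀ i, 0 < t i}

/-- The function `Φ(v;y)` of the paper, complex `v`. -/
def Phi (r ν0 : ℕ) (ν : Fin r → ℕ) (v : ℂ) (y : ℝ) : ℂ :=
  ((1 / Real.Gamma ((ν0 : ℝ) + 1) : ℝ) : ℂ) *
    ∫ t in posOrth r,
      (((∏ i, (t i) ^ ((ν i : ℝ) - 1) * Real.exp (-t i)) *
          (y / ∏ i, t i) ^ ν0 * Real.exp (-(y / ∏ i, t i)) : ℝ) : ℂ) *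
        hyp0F1 ((ν0 : ℝ) + 1) (-(v * ((y / ∏ i, t i : ℝ) : ℂ)))

/-- The function `Φ(v;y)` of the paper, real `v`. -/
def PhiR (r ν0 : ℕ) (ν : Fin r → ℕ) (v y : ℝ) : ℝ :=
  (1 / Real.Gamma ((ν0 : ℝ) + 1)) *
    ∫ t in posOrth r,
      ((∏ i, (t i) ^ ((ν i : ℝ) - 1) * Real.exp (-t i)) *
          (y / ∏ i, t i) ^ ν0 * Real.exp (-(y / ∏ i, t i))) *
        hyp0F1R ((ν0 : ℝ) + 1) (-(v * (y / ∏ i, t i)))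

/-- The double-contour-integral correlation kernel `K_N(x,y)` of Proposition 2.1,
with `C` the counterclockwise circle of center `c` and radius `R`. -/
def KN (r ν0 N : ℕ) (ν : Fin r → ℕ) (a : Fin N → ℝ) (c : ℂ) (R : ℝ) (x y : ℝ) : ℂ :=
  ∫ u in Set.Ioi (0 : ℝ),
    (2 * Real.pi * Complex.I)⁻¹ *
      ∮ v in C(c, R),
        (u : ℂ) ^ ν0 * Complex.exp (-(u : ℂ) + v) * ((Psi r ν0 ν u x : ℝ) : ℂ) *
          Phi r ν0 ν v y * ((u : ℂ) - v)⁻¹ * ∏ l, ((u : ℂ) + (a l : ℂ)) / (v + (a l : ℂ))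

/-- An admissible contour for `K_N`: a counterclockwise circle contained in the left
half-plane which encloses all the points `-a l`. -/
def AdmCircle (N : ℕ) (a : Fin N → ℝ) (c : ℂ) (R : ℝ) : Prop :=
  0 < R ∧ c.re + R < 0 ∧ ∀ l, ‖-(a l : ℂ) - c‖ < R

/-- The Meijer G-function `G^{1,0}_{0,r+2}(—;0,-ν₀,…,-ν_r | z)`, complex argument. -/
def G1 (r ν0 : ℕ) (ν : Fin r → ℕ) (z : ℂ) : ℂ :=
  ∑' k : ℕ, (-z) ^ k /
    ((Nat.factorial k : ℂ) * (Real.Gamma ((ν0 : ℝ) + 1 + k) : ℂ) *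
      ∏ l, (Real.Gamma ((ν l : ℝ) + 1 + k) : ℂ))

/-- The Meijer G-function `G^{1,0}_{0,r+2}(—;0,-ν₀,…,-ν_r | z)`, real argument. -/
def G1R (r ν0 : ℕ) (ν : Fin r → ℕ) (z : ℝ) : ℝ :=
  ∑' k : ℕ, (-z) ^ k /
    (Nat.factorial k * Real.Gamma ((ν0 : ℝ) + 1 + k) *
      ∏ l, Real.Gamma ((ν l : ℝ) + 1 + k))

/-- `g₀(w) = ∑ (-1)^k w^{ν₀+k}/(k! Γ(ν₀+k+1))`, complex argument. -/
def g0C (ν0 : ℕ) (w : ℂ) : ℂ :=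
  ∑' k : ℕ, (-1 : ℂ) ^ k * w ^ (ν0 + k) /
    ((Nat.factorial k : ℂ) * (Real.Gamma ((ν0 : ℝ) + k + 1) : ℂ))

/-- `g₀(w)`, real argument. -/
def g0R (ν0 : ℕ) (w : ℝ) : ℝ :=
  ∑' k : ℕ, (-1 : ℝ) ^ k * w ^ (ν0 + k) /
    (Nat.factorial k * Real.Gamma ((ν0 : ℝ) + k + 1))

/-- The Meijer G-function `G^{r+1,0}_{0,r+2}(—;ν₀,…,ν_r,0 | z)` for `z > 0`, real form. -/
def G2R (r ν0 : ℕ) (ν : Fin r → ℕ) (z : ℝ) : ℝ :=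
  ∫ t in posOrth r,
    (∏ l, (t l) ^ ((ν l : ℝ) - 1) * Real.exp (-t l)) * g0R ν0 (z / ∏ l, t l)

/-- The critical hard-edge kernel `𝒦^{h,r}(ξ,η;τ)` of Theorem 1.2, the inner integral
running up the imaginary axis `v = i t`. -/
def Kcrit (r ν0 : ℕ) (ν : Fin r → ℕ) (G2 : ℂ → ℂ) (τ ξ η : ℝ) : ℂ :=
  (2 * Real.pi * Complex.I)⁻¹ *
    ∫ u in Set.Ioi (0 : ℝ), ∫ t : ℝ,
      ((u : ℂ) / (Complex.I * t)) ^ ν0 *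
        Complex.exp (-(τ : ℂ) * u - (u : ℂ) ^ 2 / 2 + (τ : ℂ) * (Complex.I * t) +
          (Complex.I * t) ^ 2 / 2) *
        ((u : ℂ) - Complex.I * t)⁻¹ * G1 r ν0 ν ((u * ξ : ℝ) : ℂ) *
        G2 (Complex.I * t * (η : ℂ)) * Complex.I

/-- The deformed critical kernel `𝒦^{h,r}_m(ξ,η;τ,σ)` of Theorem 1.3, the inner integral
running up the vertical line `Re v = -c`. -/
def KcritLine (r ν0 m : ℕ) (ν : Fin r → ℕ) (σ : ℕ → ℝ) (G2 : ℂ → ℂ) (c τ ξ η : ℝ) : ℂ :=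
  (2 * Real.pi * Complex.I)⁻¹ *
    ∫ u in Set.Ioi (0 : ℝ), ∫ t : ℝ,
      ((u : ℂ) / (-(c : ℂ) + Complex.I * t)) ^ ν0 *
        Complex.exp (-(τ : ℂ) * u - (u : ℂ) ^ 2 / 2 +
          (τ : ℂ) * (-(c : ℂ) + Complex.I * t) + (-(c : ℂ) + Complex.I * t) ^ 2 / 2) *
        ((u : ℂ) - (-(c : ℂ) + Complex.I * t))⁻¹ *
        (∏ j ∈ Finset.range m,
          ((u : ℂ) + (σ j : ℂ)) / ((-(c : ℂ) + Complex.I * t) + (σ j : ℂ))) *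
        G1 r ν0 ν ((u * ξ : ℝ) : ℂ) * G2 ((-(c : ℂ) + Complex.I * t) * (η : ℂ)) * Complex.I




/-- `Ψ(u;x)` in the case `r = 0`. -/
def Psi0 (ν0 : ℕ) (u x : ℝ) : ℝ :=
  Real.exp x * hyp0F1R ((ν0 : ℝ) + 1) (-(u * x)) / Real.Gamma ((ν0 : ℝ) + 1)

/-- `Φ(v;y)` in the case `r = 0`, complex `v`. -/
def Phi0 (ν0 : ℕ) (v : ℂ) (y : ℝ) : ℂ :=
  ((y ^ ν0 * Real.exp (-y) / Real.Gamma ((ν0 : ℝ) + 1) : ℝ) : ℂ) *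
    hyp0F1 ((ν0 : ℝ) + 1) (-(v * (y : ℂ)))

/-- The kernel `K_N` in the case `r = 0`. -/
def KN0 (ν0 N : ℕ) (a : Fin N → ℝ) (c : ℂ) (R : ℝ) (x y : ℝ) : ℂ :=
  ∫ u in Set.Ioi (0 : ℝ),
    (2 * Real.pi * Complex.I)⁻¹ *
      ∮ v in C(c, R),
        (u : ℂ) ^ ν0 * Complex.exp (-(u : ℂ) + v) * ((Psi0 ν0 u x : ℝ) : ℂ) *
          Phi0 ν0 v y * ((u : ℂ) - v)⁻¹ * ∏ l, ((u : ℂ) + (a l : ℂ)) / (v + (a l : ℂ))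

/-- Laguerre polynomial `L_n^{ν}(x)`. -/
def laguerreL (n νp : ℕ) (x : ℝ) : ℝ :=
  ∑ k ∈ Finset.range (n + 1),
    (-1 : ℝ) ^ k * (Nat.choose (n + νp) (n - k)) * x ^ k / Nat.factorial k

/-- The function `Ψ^{(μ)}(u;x)` of Section 4. -/
def PsiMu (r ν0 : ℕ) (μ ν : Fin r → ℕ) (u x : ℝ) : ℝ :=
  (1 / Real.Gamma ((ν0 : ℝ) + 1)) *
    ∑' k : ℕ, x ^ k / Nat.factorial k * hyp1F1T k ((ν0 : ℝ) + 1) u *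
      ∏ l, Real.Gamma ((μ l : ℝ) + 1 + k) / Real.Gamma ((ν l : ℝ) + 1 + k)

/-- The open unit cube in `ℝ^r`. -/
def unitCube (r : ℕ) : Set (Fin r → ℝ) := {t | ∀ i, 0 < t i ∧ t i < 1}

/-- The function `Φ^{(μ)}(v;y)` of Section 4, complex `v`. -/
def PhiMu (r ν0 : ℕ) (μ ν : Fin r → ℕ) (v : ℂ) (y : ℝ) : ℂ :=
  ((1 / (Real.Gamma ((ν0 : ℝ) + 1) * ∏ l, Real.Gamma ((μ l : ℝ) - (ν l : ℝ))) : ℝ) : ℂ) *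
    ∫ t in unitCube r,
      (((∏ l, (t l) ^ ((ν l : ℝ) - 1) * (1 - t l) ^ ((μ l : ℝ) - (ν l : ℝ) - 1)) *
          (y / ∏ l, t l) ^ ν0 * Real.exp (-(y / ∏ l, t l)) : ℝ) : ℂ) *
        hyp0F1 ((ν0 : ℝ) + 1) (-(v * ((y / ∏ l, t l : ℝ) : ℂ)))

/-- The function `Φ^{(μ)}(v;y)` of Section 4, real `v`. -/
def PhiMuR (r ν0 : ℕ) (μ ν : Fin r → ℕ) (v y : ℝ) : ℝ :=
  (1 / (Real.Gamma ((ν0 : ℝ) + 1) * ∏ l, Real.Gamma ((μ l : ℝ) - (ν l : ℝ)))) *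
    ∫ t in unitCube r,
      ((∏ l, (t l) ^ ((ν l : ℝ) - 1) * (1 - t l) ^ ((μ l : ℝ) - (ν l : ℝ) - 1)) *
          (y / ∏ l, t l) ^ ν0 * Real.exp (-(y / ∏ l, t l))) *
        hyp0F1R ((ν0 : ℝ) + 1) (-(v * (y / ∏ l, t l)))

/-- The kernel `K_N` for the truncated-unitary product of Section 4. -/
def KNmu (r ν0 N : ℕ) (μ ν : Fin r → ℕ) (a : Fin N → ℝ) (c : ℂ) (R : ℝ) (x y : ℝ) : ℂ :=
  ∫ u in Set.Ioi (0 : ℝ),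
    (2 * Real.pi * Complex.I)⁻¹ *
      ∮ v in C(c, R),
        (u : ℂ) ^ ν0 * Complex.exp (-(u : ℂ) + v) * ((PsiMu r ν0 μ ν u x : ℝ) : ℂ) *
          PhiMu r ν0 μ ν v y * ((u : ℂ) - v)⁻¹ * ∏ l, ((u : ℂ) + (a l : ℂ)) / (v + (a l : ℂ))

/-- Mixed domain `(0,1)^q × (0,∞)^{r-q}`. -/
def mixedSet (r q : ℕ) : Set (Fin r → ℝ) := {t | ∀ l, 0 < t l ∧ ((l : ℕ) < q → t l < 1)}

/-- The Meijer G-function `G^{1,q}_{q,r+2}(-μ₁,…,-μ_q; 0,-ν₀,…,-ν_r | z)`, real form. -/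
def G1qR (r ν0 q : ℕ) (μ ν : Fin r → ℕ) (z : ℝ) : ℝ :=
  ∑' k : ℕ, (-z) ^ k *
    (∏ l ∈ Finset.univ.filter fun l : Fin r => (l : ℕ) < q, Real.Gamma ((μ l : ℝ) + 1 + k)) /
    (Nat.factorial k * Real.Gamma ((ν0 : ℝ) + 1 + k) *
      ∏ l, Real.Gamma ((ν l : ℝ) + 1 + k))

/-- The Meijer G-function `G^{1,q}_{q,r+2}(-μ₁,…,-μ_q; 0,-ν₀,…,-ν_r | z)`, complex form. -/
def G1q (r ν0 q : ℕ) (μ ν : Fin r → ℕ) (z : ℂ) : ℂ :=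
  ∑' k : ℕ, (-z) ^ k *
    ((∏ l ∈ Finset.univ.filter fun l : Fin r => (l : ℕ) < q,
      Real.Gamma ((μ l : ℝ) + 1 + k) : ℝ) : ℂ) /
    ((Nat.factorial k : ℂ) * (Real.Gamma ((ν0 : ℝ) + 1 + k) : ℂ) *
      ∏ l, (Real.Gamma ((ν l : ℝ) + 1 + k) : ℂ))

/-- The Meijer G-function `G^{r+1,0}_{q,r+2}(μ₁,…,μ_q; ν₀,…,ν_r,0 | z)` for `z > 0`. -/
def G2qR (r ν0 q : ℕ) (μ ν : Fin r → ℕ) (z : ℝ) : ℝ :=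
  ∫ t in mixedSet r q,
    (∏ l : Fin r, if l.val < q then
        (t l) ^ ((ν l : ℝ) - 1) * (1 - t l) ^ ((μ l : ℝ) - (ν l : ℝ) - 1) /
          Real.Gamma ((μ l : ℝ) - (ν l : ℝ))
      else (t l) ^ ((ν l : ℝ) - 1) * Real.exp (-t l)) *
      g0R ν0 (z / ∏ l, t l)



lemma aux_Gamma_ge (n k : ℕ) : (Nat.factorial k : ℝ) ≤ Real.Gamma ((n : ℝ) + 1 + k) := by
  have : Real.Gamma ((n : ℝ) + 1 + k) = (Nat.factorial (n + k) : ℝ) := by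
    rw [← Real.Gamma_nat_eq_factorial]; congr 1; push_cast; ring
  rw [this]
  exact_mod_cast Nat.factorial_le (Nat.le_add_left k n)

lemma aux_Gamma_mul (n k : ℕ) :
    Real.Gamma ((n : ℝ) + 1) * (Nat.factorial k : ℝ) ≤ Real.Gamma ((n : ℝ) + 1 + k) := by
  have h1 : Real.Gamma ((n : ℝ) + 1 + k) = (Nat.factorial (n + k) : ℝ) := by
    rw [← Real.Gamma_nat_eq_factorial]; congr 1; push_cast; ring
  rw [h1, Real.Gamma_nat_eq_factorial]
  exact_mod_cast Nat.le_of_dvd (Nat.factorial_pos _)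
    (Nat.factorial_mul_factorial_dvd_factorial_add n k)

lemma aux_term (n k : ℕ) (z : ℂ) :
    ‖(Real.Gamma ((n : ℝ) + 1) : ℂ) * z ^ k /
      ((Nat.factorial k : ℂ) * (Real.Gamma ((n : ℝ) + 1 + k) : ℂ))‖ ≤
      ‖z‖ ^ k / (Nat.factorial k * Nat.factorial k) := by
  have hg : 0 < Real.Gamma ((n : ℝ) + 1) := Real.Gamma_pos_of_pos (by positivity)
  have hg2 : 0 < Real.Gamma ((n : ℝ) + 1 + k) := Real.Gamma_pos_of_pos (by positivity)
  have hk : (0 : ℝ) < Nat.factorial k := by exact_mod_cast Nat.factorial_pos k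
  rw [norm_div, norm_mul, norm_mul, norm_pow, Complex.norm_real, Complex.norm_real,
    Complex.norm_natCast, Real.norm_of_nonneg hg.le, Real.norm_of_nonneg hg2.le,
    div_le_div_iff₀ (by positivity) (by positivity)]
  have := mul_le_mul_of_nonneg_left (aux_Gamma_mul n k)
    (by positivity : 0 ≤ ‖z‖ ^ k * (Nat.factorial k : ℝ))
  nlinarith [this]

lemma aux_term2 (n k : ℕ) (z : ℂ) (M w : ℝ) (hM : 0 ≤ M) (hw : 0 ≤ w) (hz : ‖z‖ ≤ M * w) :
    ‖(Real.Gamma ((n : ℝ) + 1) : ℂ) * z ^ k /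
      ((Nat.factorial k : ℂ) * (Real.Gamma ((n : ℝ) + 1 + k) : ℂ))‖ ≤
      (2 * M) ^ k / Nat.factorial k * Real.exp (w / 2) := by
  refine (aux_term n k z).trans ?_
  have hk : (0 : ℝ) < Nat.factorial k := by exact_mod_cast Nat.factorial_pos k
  calc ‖z‖ ^ k / (Nat.factorial k * Nat.factorial k)
      ≤ (M * w) ^ k / (Nat.factorial k * Nat.factorial k) := by gcongr
    _ = (2 * M) ^ k / Nat.factorial k * ((w / 2) ^ k / Nat.factorial k) := by
        rw [show M * w = (2 * M) * (w / 2) by ring, mul_pow]; field_simp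
    _ ≤ _ := by
        gcongr
        exact Real.pow_div_factorial_le_exp _ (by positivity) k

lemma aux_summ (M c : ℝ) : Summable fun k : ℕ => M ^ k / Nat.factorial k * c :=
  (Real.summable_pow_div_factorial M).mul_right c

lemma aux_tsum_exp (M : ℝ) : ∑' k : ℕ, M ^ k / Nat.factorial k = Real.exp M := by
  rw [Real.exp_eq_exp_ℝ, NormedSpace.exp_eq_tsum_div]

lemma aux_hyp_bound (n : ℕ) (z : ℂ) (M w : ℝ) (hM : 0 ≤ M) (hw : 0 ≤ w) (hz : ‖z‖ ≤ M * w) :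
    ‖hyp0F1 ((n : ℝ) + 1) z‖ ≤ Real.exp (2 * M) * Real.exp (w / 2) := by
  unfold hyp0F1
  rw [← aux_tsum_exp, ← tsum_mul_right]
  exact tsum_of_norm_bounded (aux_summ _ _).hasSum (fun k => aux_term2 n k z M w hM hw hz)

lemma aux_hyp_cont (n : ℕ) : Continuous (hyp0F1 ((n : ℝ) + 1)) := by
  rw [continuous_iff_continuousAt]
  intro z
  have : ContinuousOn (hyp0F1 ((n : ℝ) + 1)) (Metric.ball 0 (‖z‖ + 1)) := by
    unfold hyp0F1
    refine continuousOn_tsum (u := fun k : ℕ => (2 * (‖z‖ + 1)) ^ k / Nat.factorial k *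
      Real.exp (1 / 2)) (fun k => by fun_prop) (aux_summ _ _) ?_
    intro k v hv
    refine aux_term2 n k v (‖z‖ + 1) 1 (by positivity) (by positivity) ?_
    simpa using (mem_ball_zero_iff.1 hv).le
  exact this.continuousAt (Metric.isOpen_ball.mem_nhds (by simp))

lemma aux_wexp (n : ℕ) (w : ℝ) (hw : 0 < w) :
    w ^ n * Real.exp (-w) * Real.exp (w / 2) ≤
      (Nat.factorial (n + 1) * 2 ^ (n + 1)) * w⁻¹ := by
  have h := Real.pow_div_factorial_le_exp _ (show 0 ≤ w / 2 by positivity) (n + 1)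
  have hk : (0 : ℝ) < Nat.factorial (n + 1) := by exact_mod_cast Nat.factorial_pos _
  have e1 : Real.exp (-w) * Real.exp (w / 2) = (Real.exp (w / 2))⁻¹ := by
    rw [← Real.exp_add, ← Real.exp_neg]; congr 1; ring
  rw [mul_assoc, e1, ← div_eq_mul_inv, ← div_eq_mul_inv, div_le_div_iff₀ (by positivity) hw]
  rw [div_le_iff₀ hk, div_pow, div_le_iff₀ (by positivity)] at h
  rw [← pow_succ]
  linarith

lemma aux_dom_integrable (r : ℕ) (ν : Fin r → ℕ) (c : ℝ) :
    IntegrableOn (fun t : Fin r → ℝ =>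
      c * ∏ i, Real.exp (-t i) * (t i) ^ (((ν i : ℝ) + 1) - 1)) (posOrth r) := by
  have hs : posOrth r = Set.pi Set.univ (fun _ => Set.Ioi (0 : ℝ)) := by
    ext t; simp [posOrth]
  refine Integrable.const_mul ?_ c
  rw [hs, volume_pi, Measure.restrict_pi_pi]
  exact Integrable.fintype_prod
    (f := fun (i : Fin r) (s : ℝ) => Real.exp (-s) * s ^ (((ν i : ℝ) + 1) - 1))
    (fun i => Real.GammaIntegral_convergent (by positivity))

lemma aux_posOrth_meas (r : ℕ) : MeasurableSet (posOrth r) := by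
  have hs : posOrth r = Set.pi Set.univ (fun _ => Set.Ioi (0 : ℝ)) := by
    ext t; simp [posOrth]
  rw [hs]
  exact MeasurableSet.univ_pi fun _ => measurableSet_Ioi

lemma aux_Phi_meas (r ν0 : ℕ) (ν : Fin r → ℕ) (v : ℂ) (y : ℝ) :
    Measurable (fun t : Fin r → ℝ =>
      (((∏ i, (t i) ^ ((ν i : ℝ) - 1) * Real.exp (-t i)) *
          (y / ∏ i, t i) ^ ν0 * Real.exp (-(y / ∏ i, t i)) : ℝ) : ℂ) *
        hyp0F1 ((ν0 : ℝ) + 1) (-(v * ((y / ∏ i, t i : ℝ) : ℂ)))) := by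
  have hT : Measurable fun t : Fin r → ℝ => y / ∏ i, t i := by fun_prop
  have h1 : Measurable fun t : Fin r → ℝ =>
      hyp0F1 ((ν0 : ℝ) + 1) (-(v * ((y / ∏ i, t i : ℝ) : ℂ))) :=
    (aux_hyp_cont ν0).measurable.comp ((Complex.measurable_ofReal.comp hT).const_mul v).neg
  refine Measurable.mul (Complex.measurable_ofReal.comp ?_) h1
  refine Measurable.mul (Measurable.mul ?_ (hT.pow_const _)) (Real.measurable_exp.comp hT.neg)
  refine Finset.measurable_fun_prod _ fun i _ => ?_
  exact ((measurable_pi_apply i).pow_const _).mul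
    (Real.measurable_exp.comp (measurable_pi_apply i).neg)

lemma aux_Phi_cont (r ν0 : ℕ) (ν : Fin r → ℕ) (y : ℝ) (hy : 0 < y) :
    Continuous (fun v => Phi r ν0 ν v y) := by
  rw [continuous_iff_continuousAt]
  intro z
  set M : ℝ := ‖z‖ + 1 with hMdef
  have hM : 0 ≤ M := by positivity
  obtain ⟨D, hD⟩ : ∃ D : ℝ, D = (Nat.factorial (ν0 + 1) : ℝ) * 2 ^ (ν0 + 1) := ⟨_, rfl⟩
  have : ContinuousOn (fun v => Phi r ν0 ν v y) (Metric.ball 0 M) := by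
    unfold Phi
    refine continuousOn_const.mul ?_
    refine continuousOn_of_dominated
      (bound := fun t : Fin r → ℝ => ((D * y⁻¹) * Real.exp (2 * M)) *
        ∏ i, Real.exp (-t i) * (t i) ^ (((ν i : ℝ) + 1) - 1)) ?_ ?_
      (aux_dom_integrable r ν ((D * y⁻¹) * Real.exp (2 * M))) ?_
    · intro v _
      exact (aux_Phi_meas r ν0 ν v y).aestronglyMeasurable
    · intro v hv
      filter_upwards [ae_restrict_mem (aux_posOrth_meas r)] with t ht
      have hti : ∀ i, 0 < t i := ht
      have hT : 0 < ∏ i, t i := Finset.prod_pos fun i _ => hti i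
      have hw : 0 < y / ∏ i, t i := by positivity
      set w := y / ∏ i, t i with hwdef
      have hb := aux_hyp_bound ν0 (-(v * (w : ℂ))) M w hM hw.le (by
        rw [norm_neg, norm_mul, Complex.norm_real, Real.norm_of_nonneg hw.le]
        gcongr
        exact (mem_ball_zero_iff.1 hv).le)
      have hA : 0 ≤ ∏ i, (t i) ^ ((ν i : ℝ) - 1) * Real.exp (-t i) :=
        Finset.prod_nonneg fun i _ => mul_nonneg (Real.rpow_nonneg (hti i).le _) (Real.exp_pos _).le
      rw [norm_mul, Complex.norm_real, Real.norm_of_nonneg (by positivity)]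
      have hprod : ∏ i, Real.exp (-t i) * (t i) ^ (((ν i : ℝ) + 1) - 1) =
          (∏ i, (t i) ^ ((ν i : ℝ) - 1) * Real.exp (-t i)) * ∏ i, t i := by
        rw [← Finset.prod_mul_distrib]
        refine Finset.prod_congr rfl fun i _ => ?_
        rw [show ((ν i : ℝ) + 1 - 1) = ((ν i : ℝ) - 1) + 1 by ring,
          Real.rpow_add_one (hti i).ne']
        ring
      have hwi : w⁻¹ = y⁻¹ * ∏ i, t i := by rw [hwdef, inv_div, div_eq_inv_mul]
      have hx := aux_wexp ν0 w hw
      rw [hwi, ← hD] at hx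
      set A := ∏ i, (t i) ^ ((ν i : ℝ) - 1) * Real.exp (-t i) with hAdef
      calc A * w ^ ν0 * Real.exp (-w) * ‖hyp0F1 ((ν0 : ℝ) + 1) (-(v * (w : ℂ)))‖
          ≤ A * w ^ ν0 * Real.exp (-w) * (Real.exp (2 * M) * Real.exp (w / 2)) := by gcongr
        _ = A * Real.exp (2 * M) * (w ^ ν0 * Real.exp (-w) * Real.exp (w / 2)) := by ring
        _ ≤ A * Real.exp (2 * M) *
            (D * (y⁻¹ * ∏ i, t i)) := by gcongr
        _ = _ := by rw [hprod]; ring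
    · filter_upwards with t
      refine continuousOn_const.mul ?_
      exact ((aux_hyp_cont ν0).comp (by fun_prop)).continuousOn
  exact this.continuousAt (Metric.isOpen_ball.mem_nhds (by simp [hMdef]))

lemma aux_poch_neg (k j : ℕ) : |poch (-(k : ℝ)) j| ≤ (Nat.choose k j : ℝ) * Nat.factorial j := by
  have h : |poch (-(k : ℝ)) j| = (Nat.descFactorial k j : ℝ) := by
    unfold poch
    induction j with
    | zero => simp
    | succ j ih =>
      rw [Finset.prod_range_succ, abs_mul, ih, Nat.descFactorial_succ]
      rcases le_or_gt j k with hjk | hjk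
      · have : (j : ℝ) ≤ k := by exact_mod_cast hjk
        rw [abs_of_nonpos (by linarith)]
        push_cast [Nat.cast_sub hjk]
        ring
      · simp [Nat.descFactorial_of_lt hjk]
  rw [h, Nat.descFactorial_eq_factorial_mul_choose]
  push_cast
  rw [mul_comm]

lemma aux_poch_pos (n j : ℕ) : (Nat.factorial j : ℝ) ≤ poch ((n : ℝ) + 1) j := by
  unfold poch
  induction j with
  | zero => simp
  | succ j ih =>
    rw [Finset.prod_range_succ, Nat.factorial_succ, mul_comm]
    push_cast
    have h0 : (0 : ℝ) ≤ n := by positivity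
    refine mul_le_mul ih (by linarith) (by positivity) ((by positivity : (0 : ℝ) ≤ _).trans ih)

lemma aux_1F1 (n k : ℕ) (u : ℝ) (hu : 0 ≤ u) :
    |hyp1F1T k ((n : ℝ) + 1) u| ≤ 3 ^ k * Real.exp (u / 2) := by
  unfold hyp1F1T
  refine (Finset.abs_sum_le_sum_abs _ _).trans ?_
  have h3 : (3 : ℝ) ^ k = ∑ j ∈ Finset.range (k + 1), (2 : ℝ) ^ j * (Nat.choose k j : ℝ) := by
    have := add_pow (2 : ℝ) 1 k
    norm_num at this
    exact this
  rw [h3, Finset.sum_mul]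
  refine Finset.sum_le_sum fun j _ => ?_
  have hj : (0 : ℝ) < Nat.factorial j := by exact_mod_cast Nat.factorial_pos j
  have hp := aux_poch_pos n j
  have hp0 : 0 < poch ((n : ℝ) + 1) j := hj.trans_le hp
  rw [abs_mul, abs_div, abs_of_pos (mul_pos hp0 hj), abs_of_nonneg (pow_nonneg hu j)]
  have he := Real.pow_div_factorial_le_exp _ (show 0 ≤ u / 2 by positivity) j
  calc |poch (-(k : ℝ)) j| / (poch ((n : ℝ) + 1) j * Nat.factorial j) * u ^ j
      ≤ ((Nat.choose k j : ℝ) * Nat.factorial j) / (Nat.factorial j * Nat.factorial j) * u ^ j := by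
        gcongr
        exact aux_poch_neg k j
    _ = 2 ^ j * (Nat.choose k j : ℝ) * ((u / 2) ^ j / Nat.factorial j) := by
        rw [div_pow]; field_simp
    _ ≤ _ := by gcongr

lemma aux_Psi_term (r ν0 : ℕ) (ν : Fin r → ℕ) (u x : ℝ) (hu : 0 ≤ u) (hx : 0 < x) (k : ℕ) :
    ‖x ^ k / Nat.factorial k * hyp1F1T k ((ν0 : ℝ) + 1) u *
      ∏ l, 1 / Real.Gamma ((ν l : ℝ) + 1 + k)‖ ≤
      (3 * x) ^ k / Nat.factorial k * Real.exp (u / 2) := by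
  have hk : (1 : ℝ) ≤ Nat.factorial k := by exact_mod_cast Nat.factorial_pos k
  have hpos : ∀ l, 1 ≤ Real.Gamma ((ν l : ℝ) + 1 + k) := fun l => hk.trans (aux_Gamma_ge _ _)
  have hP0 : 0 ≤ ∏ l, 1 / Real.Gamma ((ν l : ℝ) + 1 + k) :=
    Finset.prod_nonneg fun l _ => by have := hpos l; positivity
  have hP1 : ∏ l, 1 / Real.Gamma ((ν l : ℝ) + 1 + k) ≤ 1 :=
    Finset.prod_le_one (fun l _ => by have := hpos l; positivity)
      fun l _ => by
        have := hpos l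
        rw [div_le_one (by linarith)]; exact this
  rw [Real.norm_eq_abs, abs_mul, abs_mul, abs_of_nonneg hP0, abs_of_nonneg (by positivity)]
  have h1 := aux_1F1 ν0 k u hu
  calc _ ≤ x ^ k / Nat.factorial k * (3 ^ k * Real.exp (u / 2)) * 1 := by gcongr
    _ = _ := by rw [mul_pow]; ring

lemma aux_Psi_bound (r ν0 : ℕ) (ν : Fin r → ℕ) (u x : ℝ) (hu : 0 ≤ u) (hx : 0 < x) :
    |Psi r ν0 ν u x| ≤ (1 / Real.Gamma ((ν0 : ℝ) + 1)) * Real.exp (3 * x) * Real.exp (u / 2) := by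
  unfold Psi
  have hg : 0 < Real.Gamma ((ν0 : ℝ) + 1) := Real.Gamma_pos_of_pos (by positivity)
  rw [abs_mul, abs_of_pos (by positivity), mul_assoc]
  gcongr
  rw [← aux_tsum_exp, ← tsum_mul_right]
  exact tsum_of_norm_bounded (aux_summ _ _).hasSum (aux_Psi_term r ν0 ν u x hu hx)

lemma aux_Psi_meas (r ν0 : ℕ) (ν : Fin r → ℕ) (x : ℝ) (hx : 0 < x) :
    ContinuousOn (fun u => Psi r ν0 ν u x) (Set.Ici 0) := by
  intro z hz
  have : ContinuousOn (fun u => Psi r ν0 ν u x) (Set.Ici 0 ∩ Set.Iio (z + 1)) := by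
    unfold Psi
    refine continuousOn_const.mul ?_
    refine continuousOn_tsum (u := fun k : ℕ => (3 * x) ^ k / Nat.factorial k *
      Real.exp ((z + 1) / 2)) (fun k => ?_) (aux_summ _ _) ?_
    · unfold hyp1F1T; fun_prop
    · intro k u hu
      refine (aux_Psi_term r ν0 ν u x hu.1 hx k).trans ?_
      have := hu.2
      simp only [Set.mem_Iio] at this
      gcongr
  have h2 := this z ⟨hz, by simp⟩
  exact (continuousWithinAt_inter (Iio_mem_nhds (by linarith))).1 h2

lemma aux_W_int (r ν0 : ℕ) (ν : Fin r → ℕ) (x : ℝ) (hx : 0 < x) (p : Polynomial ℝ) :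
    IntegrableOn (fun u => (u ^ ν0 * Real.exp (-u) * Psi r ν0 ν u x) * p.eval u)
      (Set.Ioi 0) := by
  induction p using Polynomial.induction_on' with
  | add p q hp hq =>
    simp only [Polynomial.eval_add, mul_add]
    exact Integrable.add hp hq
  | monomial n c =>
    have hI : IntegrableOn (fun u : ℝ => u ^ ((ν0 + n : ℕ) : ℝ) * Real.exp (-(1 / 2) * u))
        (Set.Ioi 0) := by
      have := integrableOn_rpow_mul_exp_neg_mul_rpow (p := 1) (s := ((ν0 + n : ℕ) : ℝ))
        (b := 1 / 2) (by have : (0 : ℝ) ≤ ((ν0 + n : ℕ) : ℝ) := by positivity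
                         linarith) one_pos (by norm_num)
      simpa using this
    have hI2 := hI.const_mul (|c| * ((1 / Real.Gamma ((ν0 : ℝ) + 1)) * Real.exp (3 * x)))
    refine Integrable.mono' hI2 ?_ ?_
    · refine ContinuousOn.aestronglyMeasurable ?_ measurableSet_Ioi
      have := (aux_Psi_meas r ν0 ν x hx).mono Set.Ioi_subset_Ici_self
      fun_prop
    · filter_upwards [ae_restrict_mem measurableSet_Ioi] with u hu
      have hu : 0 < u := hu
      have hb := aux_Psi_bound r ν0 ν u x hu.le hx
      rw [Polynomial.eval_monomial, Real.rpow_natCast, Real.norm_eq_abs]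
      simp only [abs_mul, abs_pow, abs_of_pos hu, abs_of_pos (Real.exp_pos _)]
      have e1 : Real.exp (-(1 / 2) * u) = Real.exp (-u) * Real.exp (u / 2) := by
        rw [← Real.exp_add]; congr 1; ring
      rw [e1]
      calc u ^ ν0 * Real.exp (-u) * |Psi r ν0 ν u x| * (|c| * u ^ n)
          ≤ u ^ ν0 * Real.exp (-u) * ((1 / Real.Gamma ((ν0 : ℝ) + 1)) * Real.exp (3 * x) *
            Real.exp (u / 2)) * (|c| * u ^ n) := by gcongr
        _ = _ := by rw [pow_add]; ring

lemma aux_tele (m : ℕ) (σ : ℕ → ℂ) (u v : ℂ) (huv : u - v ≠ 0) (hv : ∀ l < m, v + σ l ≠ 0) :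
    (u - v)⁻¹ * ∏ l ∈ Finset.range m, ((u + σ l) / (v + σ l)) =
      (u - v)⁻¹ + ∑ k ∈ Finset.range m,
        (∏ l ∈ Finset.range k, (u + σ l)) * ∏ l ∈ Finset.range (k + 1), (v + σ l)⁻¹ := by
  induction m with
  | zero => simp
  | succ m ih =>
    rw [Finset.prod_range_succ, Finset.sum_range_succ, ← add_assoc,
      ← ih fun l hl => hv l (by omega), Finset.prod_range_succ _ m, Finset.prod_div_distrib,
      Finset.prod_inv_distrib]
    have h0 := hv m (by omega)
    have h1 : ∏ l ∈ Finset.range m, (v + σ l) ≠ 0 :=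
      Finset.prod_ne_zero_iff.2 fun l hl => hv l (by have := Finset.mem_range.1 hl; omega)
    field_simp
    ring

lemma aux_core (W : ℝ → ℝ)
    (hW : ∀ p : Polynomial ℝ, IntegrableOn (fun u => W u * p.eval u) (Set.Ioi 0))
    (F : ℂ → ℂ) (cC : ℂ) (R : ℝ) (hR : 0 < R) (hleft : cC.re + R < 0)
    (hF : ContinuousOn F (Metric.sphere cC R)) (m n : ℕ) (a0 : ℝ) (σ : ℕ → ℝ)
    (hσ : ∀ j < m, ∀ v ∈ Metric.sphere cC R, v + (σ j : ℂ) ≠ 0) (c0 : ℂ) :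
    (∫ u in Set.Ioi (0 : ℝ), c0 * ∮ v in C(cC, R),
      ((W u * (u + a0) ^ n : ℝ) : ℂ) * (F v * (((u : ℂ) - v)⁻¹ *
        ∏ l ∈ Finset.range m, (((u : ℂ) + (σ l : ℂ)) / (v + (σ l : ℂ)))))) =
    (∫ u in Set.Ioi (0 : ℝ), c0 * ∮ v in C(cC, R),
      ((W u * (u + a0) ^ n : ℝ) : ℂ) * (F v * ((u : ℂ) - v)⁻¹)) +
    ∑ k ∈ Finset.range m,
      ((∫ u in Set.Ioi (0 : ℝ), W u * (u + a0) ^ n * ∏ l ∈ Finset.range k, (u + σ l) : ℝ) : ℂ) *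
        (c0 * ∮ v in C(cC, R), F v * ∏ l ∈ Finset.range (k + 1), (v + (σ l : ℂ))⁻¹) := by
  have hre : ∀ v ∈ Metric.sphere cC R, v.re ≤ cC.re + R := by
    intro v hv
    have h1 : |(v - cC).re| ≤ ‖v - cC‖ := Complex.abs_re_le_norm _
    rw [mem_sphere_iff_norm.1 hv] at h1
    have := (abs_le.1 h1).2
    simp at this
    linarith
  have hnorm : ∀ u : ℝ, 0 ≤ u → ∀ v ∈ Metric.sphere cC R, -(cC.re + R) ≤ ‖(u : ℂ) - v‖ := by
    intro u hu v hv
    have h1 := Complex.re_le_norm ((u : ℂ) - v)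
    have := hre v hv
    simp at h1
    linarith
  have hne : ∀ u : ℝ, 0 ≤ u → ∀ v ∈ Metric.sphere cC R, (u : ℂ) - v ≠ 0 := by
    intro u hu v hv h
    have := hnorm u hu v hv
    rw [h, norm_zero] at this
    linarith
  have hQ : ∀ k ∈ Finset.range m, ContinuousOn
      (fun v => F v * ∏ l ∈ Finset.range (k + 1), (v + (σ l : ℂ))⁻¹) (Metric.sphere cC R) := by
    intro k hk
    refine hF.mul (continuousOn_finsetProd _ fun l hl => ?_)
    refine ContinuousOn.inv₀ (by fun_prop) (hσ l ?_)
    have := Finset.mem_range.1 hl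
    have := Finset.mem_range.1 hk
    omega
  have hI : ∀ u : ℝ, 0 ≤ u →
      ContinuousOn (fun v => F v * ((u : ℂ) - v)⁻¹) (Metric.sphere cC R) := by
    intro u hu
    exact hF.mul (ContinuousOn.inv₀ (by fun_prop) (hne u hu))
  have hpoly : ∀ k, IntegrableOn
      (fun u => W u * (u + a0) ^ n * ∏ l ∈ Finset.range k, (u + σ l)) (Set.Ioi 0) := by
    intro k
    have := hW ((Polynomial.X + Polynomial.C a0) ^ n *
      ∏ l ∈ Finset.range k, (Polynomial.X + Polynomial.C (σ l)))
    simpa [Polynomial.eval_prod, mul_assoc] using this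
  -- pointwise identity
  have hpt : ∀ u ∈ Set.Ioi (0 : ℝ), (c0 * ∮ v in C(cC, R),
      ((W u * (u + a0) ^ n : ℝ) : ℂ) * (F v * (((u : ℂ) - v)⁻¹ *
        ∏ l ∈ Finset.range m, (((u : ℂ) + (σ l : ℂ)) / (v + (σ l : ℂ)))))) =
      (c0 * ∮ v in C(cC, R), ((W u * (u + a0) ^ n : ℝ) : ℂ) * (F v * ((u : ℂ) - v)⁻¹)) +
      ∑ k ∈ Finset.range m,
        ((W u * (u + a0) ^ n * ∏ l ∈ Finset.range k, (u + σ l) : ℝ) : ℂ) *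
        (c0 * ∮ v in C(cC, R), F v * ∏ l ∈ Finset.range (k + 1), (v + (σ l : ℂ))⁻¹) := by
    intro u hu
    have hu : 0 ≤ u := le_of_lt hu
    have h1 : (∮ v in C(cC, R),
      ((W u * (u + a0) ^ n : ℝ) : ℂ) * (F v * (((u : ℂ) - v)⁻¹ *
        ∏ l ∈ Finset.range m, (((u : ℂ) + (σ l : ℂ)) / (v + (σ l : ℂ)))))) =
        ∮ v in C(cC, R), (((W u * (u + a0) ^ n : ℝ) : ℂ) * (F v * ((u : ℂ) - v)⁻¹) +
          ∑ k ∈ Finset.range m,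
          ((W u * (u + a0) ^ n * ∏ l ∈ Finset.range k, (u + σ l) : ℝ) : ℂ) *
            (F v * ∏ l ∈ Finset.range (k + 1), (v + (σ l : ℂ))⁻¹)) := by
      refine circleIntegral.integral_congr hR.le fun v hv => ?_
      rw [aux_tele m (fun l => (σ l : ℂ)) u v (hne u hu v hv) (fun l hl => hσ l hl v hv),
        mul_add, mul_add, Finset.mul_sum, Finset.mul_sum]
      congr 1
      refine Finset.sum_congr rfl fun k _ => ?_
      push_cast
      ring
    have hk : ∀ k ∈ Finset.range m, CircleIntegrable (fun v =>
        ((W u * (u + a0) ^ n * ∏ l ∈ Finset.range k, (u + σ l) : ℝ) : ℂ) *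
            (F v * ∏ l ∈ Finset.range (k + 1), (v + (σ l : ℂ))⁻¹)) cC R := fun k hk =>
      (continuousOn_const.mul (hQ k hk)).circleIntegrable hR.le
    have hk1 : CircleIntegrable (fun v =>
        ((W u * (u + a0) ^ n : ℝ) : ℂ) * (F v * ((u : ℂ) - v)⁻¹)) cC R :=
      (continuousOn_const.mul (hI u hu)).circleIntegrable hR.le
    have hk2 : CircleIntegrable (fun v => ∑ k ∈ Finset.range m,
        ((W u * (u + a0) ^ n * ∏ l ∈ Finset.range k, (u + σ l) : ℝ) : ℂ) *
            (F v * ∏ l ∈ Finset.range (k + 1), (v + (σ l : ℂ))⁻¹)) cC R :=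
      ContinuousOn.circleIntegrable hR.le
        (continuousOn_finsetSum _ fun k hk => continuousOn_const.mul (hQ k hk))
    rw [h1, circleIntegral.integral_add hk1 hk2,
      circleIntegral.integral_fun_sum hk, mul_add, Finset.mul_sum]
    congr 1
    refine Finset.sum_congr rfl fun k _ => ?_
    rw [circleIntegral.integral_const_mul]
    ring
  -- integrability of the main term
  have hA : IntegrableOn (fun u : ℝ => c0 * ∮ v in C(cC, R),
      ((W u * (u + a0) ^ n : ℝ) : ℂ) * (F v * ((u : ℂ) - v)⁻¹)) (Set.Ioi 0) := by
    set H : ℝ → ℂ := fun u => ∮ v in C(cC, R), F v * (((max u 0 : ℝ) : ℂ) - v)⁻¹ with hH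
    have hsph : ∀ θ, circleMap cC R θ ∈ Metric.sphere cC R := fun θ => circleMap_mem_sphere _ hR.le θ
    have hHc : Continuous H := by
      simp only [hH, circleIntegral]
      refine intervalIntegral.continuous_parametric_intervalIntegral_of_continuous' ?_ _ _
      have hFc : Continuous fun θ => F (circleMap cC R θ) :=
        hF.comp_continuous (continuous_circleMap _ _) hsph
      have hd : Continuous fun θ => deriv (circleMap cC R) θ := by
        simp only [deriv_circleMap]; fun_prop
      have hi : Continuous fun p : ℝ × ℝ => (((max p.1 0 : ℝ) : ℂ) - circleMap cC R p.2)⁻¹ :=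
        Continuous.inv₀ (by fun_prop) fun p => hne _ (le_max_right _ _) _ (hsph _)
      exact (hd.comp continuous_snd).smul ((hFc.comp continuous_snd).mul hi)
    obtain ⟨B, hB⟩ := (isCompact_sphere cC R).exists_bound_of_continuousOn hF
    have hHb : ∀ u, ‖H u‖ ≤ 2 * Real.pi * R * (B * (-(cC.re + R))⁻¹) := by
      intro u
      refine circleIntegral.norm_integral_le_of_norm_le_const hR.le fun v hv => ?_
      rw [norm_mul, norm_inv]
      have h0 := hnorm _ (le_max_right u 0) v hv
      have hB' := hB v hv
      have : 0 < -(cC.re + R) := by linarith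
      have : 0 ≤ B := (norm_nonneg _).trans hB'
      gcongr
    have h0 := hpoly 0
    simp only [Finset.range_zero, Finset.prod_empty, mul_one] at h0
    have h0c : IntegrableOn (fun u => ((W u * (u + a0) ^ n : ℝ) : ℂ)) (Set.Ioi 0) := h0.ofReal
    have h2 := (h0c.bdd_mul (f := H) hHc.aestronglyMeasurable (ae_of_all _ hHb)).const_mul c0
    refine IntegrableOn.congr_fun h2 (fun u hu => ?_) measurableSet_Ioi
    have hu : 0 < u := hu
    simp only [circleIntegral.integral_const_mul, hH, max_eq_left hu.le]
    ring
  rw [setIntegral_congr_fun measurableSet_Ioi hpt]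
  have hS : ∀ k ∈ Finset.range m, IntegrableOn (fun u =>
        ((W u * (u + a0) ^ n * ∏ l ∈ Finset.range k, (u + σ l) : ℝ) : ℂ) *
        (c0 * ∮ v in C(cC, R), F v * ∏ l ∈ Finset.range (k + 1), (v + (σ l : ℂ))⁻¹))
        (Set.Ioi 0) := fun k _ => Integrable.mul_const (hpoly k).ofReal _
  rw [integral_add hA (integrable_finsetSum _ hS), integral_finsetSum _ hS]
  congr 1
  refine Finset.sum_congr rfl fun k _ => ?_
  rw [integral_mul_const]
  congr 1
  exact integral_ofReal


/-- **Corollary 2.3** (decomposition of the kernel when all but `m` source parameters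
coincide). -/
theorem cor_2_3 (r ν0 N m : ℕ) (hm : m < N) (ν : Fin r → ℕ)
    (a0 : ℝ) (ha0 : 0 < a0) (σ : ℕ → ℝ) (hσ : ∀ j < m, 0 < σ j)
    (cC : ℂ) (R : ℝ) (hR : 0 < R) (hleft : cC.re + R < 0)
    (hencl0 : ‖-(a0 : ℂ) - cC‖ < R)
    (hencl : ∀ j < m, ‖-(σ j : ℂ) - cC‖ < R)
    (x y : ℝ) (hx : 0 < x) (hy : 0 < y) :
    KN r ν0 N ν (fun i => if (i : ℕ) < m then σ i else a0) cC R x y =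
      (∫ u in Set.Ioi (0 : ℝ),
        (2 * Real.pi * Complex.I)⁻¹ *
          ∮ v in C(cC, R),
            (u : ℂ) ^ ν0 * Complex.exp (-(u : ℂ) + v) * ((Psi r ν0 ν u x : ℝ) : ℂ) *
              Phi r ν0 ν v y * ((u : ℂ) - v)⁻¹ *
              (((u : ℂ) + (a0 : ℂ)) / (v + (a0 : ℂ))) ^ (N - m)) +
      ∑ k ∈ Finset.range m,
        ((∫ u in Set.Ioi (0 : ℝ),
            u ^ ν0 * Real.exp (-u) * Psi r ν0 ν u x * (u + a0) ^ (N - m) *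
              ∏ l ∈ Finset.range k, (u + σ l) : ℝ) : ℂ) *
          ((2 * Real.pi * Complex.I)⁻¹ *
            ∮ v in C(cC, R),
              Complex.exp v * Phi r ν0 ν v y * ((v + (a0 : ℂ)) ^ (N - m))⁻¹ *
                ∏ l ∈ Finset.range (k + 1), (v + (σ l : ℂ))⁻¹) := by
  have hn1 : ∀ b : ℝ, ‖-(b : ℂ) - cC‖ < R → ∀ v ∈ Metric.sphere cC R, v + (b : ℂ) ≠ 0 := by
    intro b hb v hv h
    rw [eq_neg_of_add_eq_zero_left h, mem_sphere_iff_norm] at hv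
    linarith
  have key := aux_core (fun u => u ^ ν0 * Real.exp (-u) * Psi r ν0 ν u x)
    (aux_W_int r ν0 ν x hx)
    (fun v => Complex.exp v * Phi r ν0 ν v y * ((v + (a0 : ℂ)) ^ (N - m))⁻¹) cC R hR hleft
    (by
      have := aux_Phi_cont r ν0 ν y hy
      refine ContinuousOn.mul (by fun_prop) (ContinuousOn.inv₀ (by fun_prop) ?_)
      exact fun v hv => pow_ne_zero _ (hn1 a0 hencl0 v hv))
    m (N - m) a0 σ (fun j hj => hn1 _ (hencl j hj)) (2 * Real.pi * Complex.I)⁻¹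
  have hprod : ∀ u v : ℂ, (∏ l : Fin N, (u + ((if (l : ℕ) < m then σ l else a0 : ℝ) : ℂ)) /
        (v + ((if (l : ℕ) < m then σ l else a0 : ℝ) : ℂ))) =
      (∏ l ∈ Finset.range m, ((u + (σ l : ℂ)) / (v + (σ l : ℂ)))) *
        ((u + (a0 : ℂ)) / (v + (a0 : ℂ))) ^ (N - m) := by
    intro u v
    rw [Fin.prod_univ_eq_prod_range (fun l => (u + ((if l < m then σ l else a0 : ℝ) : ℂ)) /
        (v + ((if l < m then σ l else a0 : ℝ) : ℂ))) N,
      ← Finset.prod_range_mul_prod_Ico _ hm.le]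
    congr 1
    · refine Finset.prod_congr rfl fun l hl => ?_
      rw [if_pos (Finset.mem_range.1 hl)]
    · rw [Finset.prod_congr rfl (g := fun _ => (u + (a0 : ℂ)) / (v + (a0 : ℂ)))
        fun l hl => by rw [if_neg (by have := (Finset.mem_Ico.1 hl).1; omega)]]
      simp [div_pow]
  have e1 : KN r ν0 N ν (fun i => if (i : ℕ) < m then σ i else a0) cC R x y = _ :=
    Eq.trans ?_ key
  · rw [e1]
    congr 1
    refine integral_congr_ae (ae_of_all _ fun u => ?_)
    simp only
    congr 2
    funext v
    rw [Complex.exp_add, div_pow]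
    push_cast
    ring
  · unfold KN
    refine integral_congr_ae (ae_of_all _ fun u => ?_)
    simp only
    congr 2
    funext v
    rw [hprod, Complex.exp_add, div_pow]
    push_cast
    ring


end
end

section
/- Proposition 2.5, formula (2.32) (average characteristic polynomial for a biorthogonal ensemble with monomial functions). Suppose in addition there is a measurable ξ_{N+1} : I → ℝ such that x ↦ |x|^{i−1}|ξ_j(x)| is integrable on I for all 1 ≤ i,j ≤ N+1, and that the matrix G̃ := [g_{ij}]_{i,j=1}^{N+1} with g_{ij} := ∫_I x^{i−1} ξ_j(x) dx is invertible; let c̃ := (G̃^{−1})^T and assume c̃_{N+1,N+1} ≠ 0. Then for every x ∈ ℝ, ∫_{I^N} ∏_{l=1}^N (x−x_l) Q_N(x₁,…,x_N) dx₁⋯dx_N = (1/c̃_{N+1,N+1}) ∑_{j=1}^{N+1} c̃_{j,N+1} x^{j−1}; in particular the average characteristic polynomial is a monic polynomial of degree N that does not depend on ξ_{N+1}. -/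
open MeasureTheory Filter Topology

noncomputable section


/-- The Andreief identity. -/
theorem andreief_aux (N : ℕ) (μ : Measure ℝ) [SigmaFinite μ] (f h : Fin N → ℝ → ℝ)
    (hfh : ∀ i j, Integrable (fun x => f i x * h j x) μ) :
    Integrable (fun x : Fin N → ℝ => (Matrix.of fun i j : Fin N => f i (x j)).det *
      (Matrix.of fun i j : Fin N => h i (x j)).det) (Measure.pi fun _ => μ) ∧
    ∫ x : Fin N → ℝ, (Matrix.of fun i j : Fin N => f i (x j)).det *
      (Matrix.of fun i j : Fin N => h i (x j)).det ∂(Measure.pi fun _ => μ) =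
    (Nat.factorial N : ℝ) * (Matrix.of fun i j : Fin N => ∫ x, f i x * h j x ∂μ).det := by
  have hexp : (fun x : Fin N → ℝ => (Matrix.of fun i j : Fin N => f i (x j)).det *
      (Matrix.of fun i j : Fin N => h i (x j)).det) = fun x =>
      ∑ τ : Equiv.Perm (Fin N), ∑ σ : Equiv.Perm (Fin N),
        (((Equiv.Perm.sign τ : ℤ) : ℝ) * ((Equiv.Perm.sign σ : ℤ) : ℝ)) *
          ∏ j, (f (σ j) (x j) * h (τ j) (x j)) := by
    funext x
    rw [mul_comm, Matrix.det_apply', Matrix.det_apply', Finset.sum_mul_sum]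
    refine Finset.sum_congr rfl fun τ _ => Finset.sum_congr rfl fun σ _ => ?_
    simp only [Matrix.of_apply, Finset.prod_mul_distrib]
    ring
  have hi : ∀ τ σ : Equiv.Perm (Fin N), Integrable (fun x : Fin N → ℝ =>
        (((Equiv.Perm.sign τ : ℤ) : ℝ) * ((Equiv.Perm.sign σ : ℤ) : ℝ)) *
          ∏ j, (f (σ j) (x j) * h (τ j) (x j))) (Measure.pi fun _ => μ) := by
    intro τ σ
    refine Integrable.const_mul ?_ _
    exact Integrable.fintype_prod (f := fun j x => f (σ j) x * h (τ j) x)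
      (fun j => hfh (σ j) (τ j))
  refine ⟨?_, ?_⟩
  · rw [hexp]
    exact integrable_finsetSum _ fun τ _ => integrable_finsetSum _ fun σ _ => hi τ σ
  · rw [hexp, integral_finsetSum _ fun τ _ => integrable_finsetSum _ fun σ _ => hi τ σ]
    set G := (Matrix.of fun i j : Fin N => ∫ x, f i x * h j x ∂μ) with hG
    have key : ∀ τ : Equiv.Perm (Fin N), ∫ x : Fin N → ℝ, ∑ σ : Equiv.Perm (Fin N),
        (((Equiv.Perm.sign τ : ℤ) : ℝ) * ((Equiv.Perm.sign σ : ℤ) : ℝ)) *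
          ∏ j, (f (σ j) (x j) * h (τ j) (x j)) ∂(Measure.pi fun _ => μ) = G.det := by
      intro τ
      rw [integral_finsetSum _ fun σ _ => hi τ σ]
      have h1 : ∀ σ : Equiv.Perm (Fin N), ∫ x : Fin N → ℝ,
          (((Equiv.Perm.sign τ : ℤ) : ℝ) * ((Equiv.Perm.sign σ : ℤ) : ℝ)) *
          ∏ j, (f (σ j) (x j) * h (τ j) (x j)) ∂(Measure.pi fun _ => μ) =
          ((Equiv.Perm.sign τ : ℤ) : ℝ) * (((Equiv.Perm.sign σ : ℤ) : ℝ) *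
            ∏ j, (G.submatrix id τ) (σ j) j) := by
        intro σ
        rw [integral_const_mul,
          integral_fintype_prod_eq_prod (fun j x => f (σ j) x * h (τ j) x)]
        simp only [hG, Matrix.submatrix_apply, Matrix.of_apply, id]
        ring
      rw [Finset.sum_congr rfl fun σ _ => h1 σ, ← Finset.mul_sum, ← Matrix.det_apply',
        Matrix.det_permute', ← mul_assoc]
      have : ((Equiv.Perm.sign τ : ℤ) : ℝ) * ((Equiv.Perm.sign τ : ℤ) : ℝ) = 1 := by
        rw [← Int.cast_mul, Int.units_coe_mul_self, Int.cast_one]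
      rw [this, one_mul]
    rw [Finset.sum_congr rfl fun τ _ => key τ]
    simp [Fintype.card_perm]

/-- Vandermonde expansion. -/
theorem vander_aux (n : ℕ) (x0 : ℝ) (x : Fin (n + 1) → ℝ) :
    (∏ l, (x0 - x l)) * (Matrix.of fun i j : Fin (n + 1) => x j ^ (i : ℕ)).det =
      ∑ j : Fin (n + 2), ((-1) ^ ((j : ℕ) + (n + 1)) * x0 ^ (j : ℕ)) *
        (Matrix.of fun i l : Fin (n + 1) => x l ^ ((j.succAbove i : Fin (n + 2)) : ℕ)).det := by
  have hV : (Matrix.of fun i j : Fin (n + 1) => x j ^ (i : ℕ)).det =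
      (Matrix.vandermonde x).det := by
    rw [← Matrix.det_transpose]; rfl
  have h1 : (Matrix.vandermonde (Fin.cons x0 x : Fin (n + 2) → ℝ)).det =
      (∏ l, (x l - x0)) * (Matrix.vandermonde x).det := by
    rw [Matrix.det_vandermonde, Matrix.det_vandermonde, Fin.prod_univ_succ, Fin.prod_Ioi_zero]
    simp [Fin.prod_Ioi_succ]
  have h2 : ∏ l, (x0 - x l) = (-1) ^ (n + 1) * ∏ l, (x l - x0) := by
    have : ∀ l, x0 - x l = (-1) * (x l - x0) := fun l => by ring
    rw [Finset.prod_congr rfl fun l _ => this l, Finset.prod_mul_distrib]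
    simp
  rw [hV, h2, mul_assoc, ← h1, Matrix.det_succ_row_zero, Finset.mul_sum]
  refine Finset.sum_congr rfl fun j _ => ?_
  have h3 : ((Matrix.vandermonde (Fin.cons x0 x : Fin (n + 2) → ℝ)).submatrix Fin.succ
      j.succAbove).det =
      (Matrix.of fun i l : Fin (n + 1) => x l ^ ((j.succAbove i : Fin (n + 2)) : ℕ)).det := by
    rw [← Matrix.det_transpose]
    congr 1
  rw [h3]
  simp only [Matrix.vandermonde_apply, Fin.cons_zero, pow_add]
  ring

/-- **Proposition 2.5, formula (2.32)** (average characteristic polynomial for a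
biorthogonal ensemble with monomial functions). -/
theorem prop_2_5_characteristic (n : ℕ) (I : Set ℝ) (hI : I.OrdConnected)
    (hIm : MeasurableSet I)
    (ξ : Fin (n + 2) → ℝ → ℝ) (hmeas : ∀ j, Measurable (ξ j))
    (hint : ∀ i j : Fin (n + 2), IntegrableOn (fun x => |x| ^ (i : ℕ) * |ξ j x|) I)
    (gt : Matrix (Fin (n + 2)) (Fin (n + 2)) ℝ)
    (hgt : ∀ i j, gt i j = ∫ x in I, x ^ (i : ℕ) * ξ j x)
    (hdetN : (gt.submatrix Fin.castSucc Fin.castSucc).det ≠ 0)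
    (hdet : IsUnit gt.det)
    (hcc : gt⁻¹ (Fin.last (n + 1)) (Fin.last (n + 1)) ≠ 0)
    (Q : (Fin (n + 1) → ℝ) → ℝ)
    (hQ : ∀ x, Q x = (1 / ((Nat.factorial (n + 1) : ℝ) *
        (gt.submatrix Fin.castSucc Fin.castSucc).det)) *
      (Matrix.of fun i j : Fin (n + 1) => x j ^ (i : ℕ)).det *
      (Matrix.of fun i j : Fin (n + 1) => ξ (Fin.castSucc i) (x j)).det)
    (x0 : ℝ) :
    ∫ x in {x : Fin (n + 1) → ℝ | ∀ l, x l ∈ I}, (∏ l, (x0 - x l)) * Q x =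
      (gt⁻¹ (Fin.last (n + 1)) (Fin.last (n + 1)))⁻¹ *
        ∑ j : Fin (n + 2), gt⁻¹ (Fin.last (n + 1)) j * x0 ^ (j : ℕ) := by
  set D := (gt.submatrix Fin.castSucc Fin.castSucc).det with hD
  have hint' : ∀ i j : Fin (n + 2), Integrable (fun x => x ^ (i : ℕ) * ξ j x)
      (volume.restrict I) := by
    intro i j
    refine Integrable.mono' (hint i j) ?_ ?_
    · exact ((measurable_id.pow_const _).mul (hmeas j)).aestronglyMeasurable
    · exact Eventually.of_forall fun x => by simp [abs_mul, abs_pow]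
  have hA := fun j : Fin (n + 2) => andreief_aux (n + 1) (volume.restrict I)
    (fun i x => x ^ ((j.succAbove i : Fin (n + 2)) : ℕ)) (fun i => ξ (Fin.castSucc i))
    (fun i k => hint' _ _)
  have hset : (volume : Measure (Fin (n + 1) → ℝ)).restrict
      {x : Fin (n + 1) → ℝ | ∀ l, x l ∈ I} =
      Measure.pi fun _ => (volume : Measure ℝ).restrict I := by
    rw [← Measure.restrict_pi_pi, volume_pi]
    congr 1
    ext x
    simp
  rw [hset]
  have hfun : ∀ x : Fin (n + 1) → ℝ, (∏ l, (x0 - x l)) * Q x =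
      ∑ j : Fin (n + 2), ((1 / ((Nat.factorial (n + 1) : ℝ) * D)) *
        ((-1) ^ ((j : ℕ) + (n + 1)) * x0 ^ (j : ℕ))) *
        ((Matrix.of fun i l : Fin (n + 1) => x l ^ ((j.succAbove i : Fin (n + 2)) : ℕ)).det *
        (Matrix.of fun i j : Fin (n + 1) => ξ (Fin.castSucc i) (x j)).det) := by
    intro x
    have hv := vander_aux n x0 x
    rw [hQ]
    calc _ = (1 / ((Nat.factorial (n + 1) : ℝ) * D)) *
          ((∏ l, (x0 - x l)) * (Matrix.of fun i j : Fin (n + 1) => x j ^ (i : ℕ)).det) *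
          (Matrix.of fun i j : Fin (n + 1) => ξ (Fin.castSucc i) (x j)).det := by ring
      _ = _ := by
        rw [hv, Finset.mul_sum, Finset.sum_mul]
        exact Finset.sum_congr rfl fun j _ => by ring
  simp only [hfun]
  rw [integral_finsetSum _ fun j _ => (hA j).1.const_mul _]
  have hadj : ∀ j : Fin (n + 2), gt⁻¹ (Fin.last (n + 1)) j = gt.det⁻¹ *
      ((-1) ^ ((j : ℕ) + (n + 1)) * (gt.submatrix j.succAbove Fin.castSucc).det) := by
    intro j
    rw [Matrix.inv_def, Matrix.smul_apply, Matrix.adjugate_fin_succ_eq_det_submatrix]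
    simp
  have hll : gt⁻¹ (Fin.last (n + 1)) (Fin.last (n + 1)) = gt.det⁻¹ * D := by
    rw [hadj, Fin.succAbove_last, ← hD]
    simp [← two_mul]
  rw [hll, Finset.mul_sum]
  refine Finset.sum_congr rfl fun j _ => ?_
  rw [integral_const_mul, (hA j).2, hadj]
  have hM : (Matrix.of fun i k : Fin (n + 1) => ∫ x in I,
      x ^ ((j.succAbove i : Fin (n + 2)) : ℕ) * ξ (Fin.castSucc k) x) =
      gt.submatrix j.succAbove Fin.castSucc := by
    ext i k
    simp [hgt]
  rw [hM]
  have hd : gt.det ≠ 0 := hdet.ne_zero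
  have hf : (Nat.factorial (n + 1) : ℝ) ≠ 0 := by positivity
  field_simp

end
end

section
/- Proposition 2.6(ii) (average reciprocal characteristic polynomial for the product ensemble, residue form). For every z ∈ ℂ∖ℝ, ∫_{(0,∞)^N} ∏_{l=1}^N (z−x_l)^{−1} 𝒫_N(x₁,…,x_N) dx₁⋯dx_N = ((−1)^{N−1}/∏_{l=1}^r Γ(ν_l+N)) ∫₀^∞ (z−t)^{−1} ( ∑_{j=1}^N e^{−a_j} Φ(−a_j;t) ∏_{l≠j} (a_l−a_j)^{−1} ) dt. -/
open MeasureTheory Filter Topology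

noncomputable section


open Polynomial in
/-- The monic polynomial with `∑ₖ aᵏ/k! (ν0+k+i)!/(ν0+k)! = eᵃ pI(a)`. -/
def pI (ν0 i : ℕ) : ℝ[X] :=
  ∑ j ∈ Finset.range (i + 1),
    C ((i.factorial : ℝ) * ((i + ν0).choose (i - j) : ℝ) / (j.factorial : ℝ)) * X ^ j

open Polynomial in
lemma pI_eq (ν0 i : ℕ) : ∃ q : ℝ[X], q.degree < i ∧ pI ν0 i = X ^ i + q := by
  refine ⟨∑ j ∈ Finset.range i,
    C ((i.factorial : ℝ) * ((i + ν0).choose (i - j) : ℝ) / (j.factorial : ℝ)) * X ^ j, ?_, ?_⟩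
  · exact Polynomial.degree_sum_fin_lt (n := i) (fun j => (i.factorial : ℝ) * ((i + ν0).choose (i - j) : ℝ) / ((j:ℕ).factorial : ℝ)) |> fun h => by
      rw [Finset.sum_range]; exact h
  · rw [pI, Finset.sum_range_succ, add_comm]
    have : (i.factorial : ℝ) ≠ 0 := by positivity
    simp [this]

lemma pI_monic (ν0 i : ℕ) : (pI ν0 i).Monic := by
  obtain ⟨q, hq, h⟩ := pI_eq ν0 i
  rw [h]; exact Polynomial.monic_X_pow_add hq

lemma pI_natDegree (ν0 i : ℕ) : (pI ν0 i).natDegree = i := by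
  obtain ⟨q, hq, h⟩ := pI_eq ν0 i
  rw [h]
  refine Polynomial.natDegree_eq_of_degree_eq_some ?_
  rw [Polynomial.degree_add_eq_left_of_degree_lt] <;> rw [Polynomial.degree_X_pow]
  exact hq

lemma pI_pos (ν0 i : ℕ) {a : ℝ} (ha : 0 < a) : 0 < (pI ν0 i).eval a := by
  rw [pI, Polynomial.eval_finsetSum]
  refine Finset.sum_pos (fun j hj => ?_) ⟨0, by simp⟩
  have : 0 < (i + ν0).choose (i - j) := Nat.choose_pos (by omega)
  simp only [Polynomial.eval_mul, Polynomial.eval_C, Polynomial.eval_pow, Polynomial.eval_X]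
  positivity

lemma hasSum_choose (a : ℝ) (j : ℕ) :
    HasSum (fun k : ℕ => a ^ k / (k.factorial : ℝ) * (k.choose j : ℝ))
      (a ^ j / (j.factorial : ℝ) * Real.exp a) := by
  rw [← hasSum_nat_add_iff' j]
  have h0 : ∑ i ∈ Finset.range j, a ^ i / (i.factorial : ℝ) * (i.choose j : ℝ) = 0 := by
    refine Finset.sum_eq_zero fun i hi => ?_
    rw [Nat.choose_eq_zero_of_lt (Finset.mem_range.1 hi)]; simp
  rw [h0, sub_zero]
  have h1 : HasSum (fun n : ℕ => a ^ n / (n.factorial : ℝ)) (Real.exp a) := by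
    rw [Real.exp_eq_exp_ℝ]; exact NormedSpace.expSeries_div_hasSum_exp a
  refine (h1.mul_left (a ^ j / (j.factorial : ℝ))).congr_fun fun n => ?_
  have h2 := Nat.add_choose_mul_factorial_mul_factorial n j
  have h3 : ((n + j).choose j : ℝ) * n.factorial * j.factorial = (n + j).factorial := by
    exact_mod_cast h2
  rw [← h3, pow_add]
  have : ((n + j).choose j : ℝ) ≠ 0 := by
    have := Nat.choose_pos (show j ≤ n + j by omega)
    positivity
  field_simp

lemma hasSum_pI (ν0 i : ℕ) (a : ℝ) :
    HasSum (fun k : ℕ => a ^ k / (k.factorial : ℝ) *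
      (((i + ν0 + k).factorial : ℝ) / ((ν0 + k).factorial : ℝ)))
      (Real.exp a * (pI ν0 i).eval a) := by
  have h := hasSum_sum (s := Finset.range (i + 1)) fun j _ =>
    (hasSum_choose a j).mul_left ((i.factorial : ℝ) * ((i + ν0).choose (i - j) : ℝ))
  have e : ∑ j ∈ Finset.range (i + 1), (i.factorial : ℝ) * ((i + ν0).choose (i - j) : ℝ) *
      (a ^ j / (j.factorial : ℝ) * Real.exp a) = Real.exp a * (pI ν0 i).eval a := by
    rw [pI, Polynomial.eval_finsetSum, Finset.mul_sum]
    refine Finset.sum_congr rfl fun j _ => ?_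
    simp only [Polynomial.eval_mul, Polynomial.eval_C, Polynomial.eval_pow, Polynomial.eval_X]
    ring
  rw [e] at h
  · refine h.congr_fun fun k => ?_
    have h1 : ((i + ν0 + k).factorial : ℝ) / ((ν0 + k).factorial : ℝ) =
        i.factorial * ((i + ν0 + k).choose i : ℝ) := by
      rw [Nat.cast_choose ℝ (show i ≤ i + ν0 + k by omega)]
      have : i + ν0 + k - i = ν0 + k := by omega
      rw [this]
      field_simp
    rw [h1, Nat.add_choose_eq, ← Finset.Nat.sum_antidiagonal_swap,
      Finset.Nat.sum_antidiagonal_eq_sum_range_succ_mk]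
    push_cast
    rw [Finset.mul_sum, Finset.mul_sum]
    refine Finset.sum_congr rfl fun j _ => ?_
    simp only [Prod.swap]
    ring

lemma Gamma_nat_aux (n k : ℕ) : Real.Gamma ((n : ℝ) + 1 + k) = ((n + k).factorial : ℝ) := by
  rw [← Real.Gamma_nat_eq_factorial]; congr 1; push_cast; ring

lemma summable_hyp (ν0 : ℕ) (z : ℝ) :
    Summable fun k : ℕ => Real.Gamma ((ν0 : ℝ) + 1) * z ^ k /
      (Nat.factorial k * Real.Gamma ((ν0 : ℝ) + 1 + k)) := by
  refine Summable.of_norm_bounded (g := fun k : ℕ => ‖z‖ ^ k / (k.factorial : ℝ))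
    (Real.summable_pow_div_factorial _) fun k => ?_
  rw [Gamma_nat_aux, Real.Gamma_nat_eq_factorial, norm_div, norm_mul, norm_mul, norm_pow,
    RCLike.norm_natCast, RCLike.norm_natCast, RCLike.norm_natCast]
  have h : (ν0.factorial : ℝ) ≤ (ν0 + k).factorial := by
    exact_mod_cast Nat.factorial_le (by omega)
  rw [div_le_div_iff₀ (by positivity) (by positivity)]
  have : 0 ≤ ‖z‖ ^ k * (k.factorial : ℝ) := by positivity
  nlinarith

lemma measurable_hyp (ν0 : ℕ) : Measurable (hyp0F1R ((ν0 : ℝ) + 1)) := by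
  refine measurable_of_tendsto_metrizable (f := fun n z => ∑ k ∈ Finset.range n,
    Real.Gamma ((ν0 : ℝ) + 1) * z ^ k /
      (Nat.factorial k * Real.Gamma ((ν0 : ℝ) + 1 + k))) (fun n => by fun_prop) ?_
  rw [tendsto_pi_nhds]
  intro z
  exact (summable_hyp ν0 z).hasSum.tendsto_sum_nat

lemma hyp_nonneg (ν0 : ℕ) {z : ℝ} (hz : 0 ≤ z) : 0 ≤ hyp0F1R ((ν0 : ℝ) + 1) z := by
  refine tsum_nonneg fun k => ?_
  rw [Gamma_nat_aux, Real.Gamma_nat_eq_factorial]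
  positivity

/-- the radial weight -/
def KK (ν0 : ℕ) (a s : ℝ) : ℝ := s ^ ν0 * Real.exp (-s) * hyp0F1R ((ν0 : ℝ) + 1) (a * s)

lemma measurable_KK (ν0 : ℕ) (a : ℝ) : Measurable (KK ν0 a) := by
  unfold KK
  have := (measurable_hyp ν0).comp (measurable_const_mul a)
  simp only [Function.comp_def] at this
  fun_prop

lemma KK_nonneg (ν0 : ℕ) {a s : ℝ} (ha : 0 < a) (hs : 0 < s) : 0 ≤ KK ν0 a s := by
  have := hyp_nonneg ν0 (mul_pos ha hs).le
  unfold KK; positivity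

lemma gamma_nat_integral (m : ℕ) :
    IntegrableOn (fun s : ℝ => s ^ m * Real.exp (-s)) (Set.Ioi 0) ∧
    ∫ s in Set.Ioi (0:ℝ), s ^ m * Real.exp (-s) = m.factorial := by
  have h : ∀ s : ℝ, s ^ m * Real.exp (-s) = Real.exp (-s) * s ^ ((m : ℝ) + 1 - 1) := by
    intro s; rw [add_sub_cancel_right, Real.rpow_natCast, mul_comm]
  simp_rw [h]
  exact ⟨Real.GammaIntegral_convergent (by positivity), by
    rw [← Real.Gamma_eq_integral (by positivity), Real.Gamma_nat_eq_factorial]⟩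

lemma KK_moment (ν0 i : ℕ) {a : ℝ} (ha : 0 < a) :
    IntegrableOn (fun s => s ^ i * KK ν0 a s) (Set.Ioi 0) ∧
    ∫ s in Set.Ioi (0:ℝ), s ^ i * KK ν0 a s =
      ν0.factorial * (Real.exp a * (pI ν0 i).eval a) := by
  have key : HasSum (fun k : ℕ => ∫ s in Set.Ioi (0:ℝ),
      ((ν0.factorial : ℝ) * (a ^ k / (k.factorial * (ν0 + k).factorial))) *
        (s ^ (i + ν0 + k) * Real.exp (-s)))
      (∫ s in Set.Ioi (0:ℝ), ∑' k : ℕ,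
        ((ν0.factorial : ℝ) * (a ^ k / (k.factorial * (ν0 + k).factorial))) *
        (s ^ (i + ν0 + k) * Real.exp (-s))) := by
    refine hasSum_integral_of_summable_integral_norm
      (fun k => ((gamma_nat_integral _).1.const_mul _)) ?_
    refine (((hasSum_pI ν0 i a).summable).mul_left (ν0.factorial : ℝ)).congr fun k => ?_
    rw [setIntegral_congr_fun measurableSet_Ioi (g := fun s =>
      ((ν0.factorial : ℝ) * (a ^ k / (k.factorial * (ν0 + k).factorial))) *
        (s ^ (i + ν0 + k) * Real.exp (-s))) ?_]
    · rw [integral_const_mul, (gamma_nat_integral _).2]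
      field_simp
    · intro s hs
      have hs : 0 < s := hs
      exact Real.norm_of_nonneg (by positivity)
  have e1 : ∀ s : ℝ, ∑' k : ℕ,
        ((ν0.factorial : ℝ) * (a ^ k / (k.factorial * (ν0 + k).factorial))) *
        (s ^ (i + ν0 + k) * Real.exp (-s)) = s ^ i * KK ν0 a s := by
    intro s
    rw [KK, hyp0F1R, ← mul_assoc, ← tsum_mul_left]
    refine tsum_congr fun k => ?_
    rw [Gamma_nat_aux, Real.Gamma_nat_eq_factorial, mul_pow, pow_add, pow_add]
    ring
  simp_rw [e1] at key
  have e2 := ((hasSum_pI ν0 i a).mul_left (ν0.factorial : ℝ))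
  have e3 : ∫ s in Set.Ioi (0:ℝ), s ^ i * KK ν0 a s =
      ν0.factorial * (Real.exp a * (pI ν0 i).eval a) := by
    refine key.unique (e2.congr_fun ?_)
    intro k
    rw [integral_const_mul, (gamma_nat_integral _).2]
    field_simp
  refine ⟨?_, e3⟩
  refine MeasureTheory.Integrable.of_integral_ne_zero ?_
  rw [e3]
  have := pI_pos ν0 i ha
  positivity

lemma orth_restrict (n : ℕ) : (volume : Measure (Fin n → ℝ)).restrict {x | ∀ l, 0 < x l} =
    Measure.pi (fun _ : Fin n => (volume : Measure ℝ).restrict (Set.Ioi 0)) := by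
  have : {x : Fin n → ℝ | ∀ l, 0 < x l} = Set.univ.pi fun _ => Set.Ioi 0 := by
    ext x; simp
  rw [this, volume_pi, Measure.restrict_pi_pi]

lemma measurableSet_posOrth (n : ℕ) : MeasurableSet (posOrth n) := by
  have : posOrth n = Set.univ.pi fun _ => Set.Ioi 0 := by
    ext x; simp [posOrth]
  rw [this]; exact MeasurableSet.univ_pi fun _ => measurableSet_Ioi

/-- the weight in `t` -/
def wt (r : ℕ) (ν : Fin r → ℕ) (t : Fin r → ℝ) : ℝ :=
  ∏ i, (t i) ^ ((ν i : ℝ) - 1) * Real.exp (-t i)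

lemma measurable_wt (r : ℕ) (ν : Fin r → ℕ) : Measurable (wt r ν) := by
  unfold wt
  fun_prop

lemma PhiR_eq (r ν0 : ℕ) (ν : Fin r → ℕ) (a y : ℝ) :
    PhiR r ν0 ν (-a) y = (1 / (ν0.factorial : ℝ)) *
      ∫ t in posOrth r, wt r ν t * KK ν0 a (y / ∏ i, t i) := by
  rw [PhiR, Real.Gamma_nat_eq_factorial]
  congr 2
  funext t
  rw [KK, wt, neg_mul, neg_neg]
  ring

lemma wt_moment (r : ℕ) (ν : Fin r → ℕ) (i : ℕ) :
    IntegrableOn (fun t => wt r ν t * (∏ l, t l) ^ (i + 1)) (posOrth r) ∧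
    ∫ t in posOrth r, wt r ν t * (∏ l, t l) ^ (i + 1) =
      ∏ l, ((ν l + i).factorial : ℝ) := by
  have e : Set.EqOn (fun t : Fin r → ℝ => wt r ν t * (∏ l, t l) ^ (i + 1))
      (fun t => ∏ l, ((t l) ^ (ν l + i) * Real.exp (- t l))) (posOrth r) := by
    intro t ht
    simp only [wt]
    rw [← Finset.prod_pow, ← Finset.prod_mul_distrib]
    refine Finset.prod_congr rfl fun l _ => ?_
    have hl : 0 < t l := ht l
    rw [mul_right_comm]
    congr 1
    rw [← Real.rpow_natCast, ← Real.rpow_natCast, ← Real.rpow_add hl]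
    congr 1
    push_cast; ring
  rw [integrableOn_congr_fun e (measurableSet_posOrth r),
    setIntegral_congr_fun (measurableSet_posOrth r) e, IntegrableOn]
  have hr := orth_restrict r
  rw [show {x : Fin r → ℝ | ∀ l, 0 < x l} = posOrth r from rfl] at hr
  rw [hr]
  refine ⟨?_, ?_⟩
  · exact Integrable.fintype_prod (f := fun l s => s ^ (ν l + i) * Real.exp (- s))
      fun l => (gamma_nat_integral _).1
  · rw [integral_fintype_prod_eq_prod (fun l s => s ^ (ν l + i) * Real.exp (- s))]
    exact Finset.prod_congr rfl fun l _ => (gamma_nat_integral _).2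

lemma scale_moment (ν0 i : ℕ) {a T : ℝ} (ha : 0 < a) (hT : 0 < T) :
    IntegrableOn (fun x => x ^ i * KK ν0 a (x / T)) (Set.Ioi 0) ∧
    ∫ x in Set.Ioi (0:ℝ), x ^ i * KK ν0 a (x / T) =
      T ^ (i + 1) * (ν0.factorial * (Real.exp a * (pI ν0 i).eval a)) := by
  have hT' : 0 < T⁻¹ := inv_pos.2 hT
  have e : ∀ x, x ^ i * KK ν0 a (x / T) =
      T ^ i * (fun s => s ^ i * KK ν0 a s) (x * T⁻¹) := by
    intro x
    simp only [← div_eq_mul_inv, div_pow]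
    field_simp
  simp_rw [e]
  refine ⟨?_, ?_⟩
  · have := (integrableOn_Ioi_comp_mul_right_iff (fun s => s ^ i * KK ν0 a s) 0 hT').2
      (by rw [zero_mul]; exact (KK_moment ν0 i ha).1)
    exact Integrable.const_mul this _
  · rw [integral_const_mul, integral_comp_mul_right_Ioi (fun s => s ^ i * KK ν0 a s) 0 hT',
      zero_mul, (KK_moment ν0 i ha).2, inv_inv, smul_eq_mul]
    ring

lemma PhiR_moment (r ν0 : ℕ) (ν : Fin r → ℕ) (i : ℕ) {a : ℝ} (ha : 0 < a) :
    IntegrableOn (fun x => x ^ i * PhiR r ν0 ν (-a) x) (Set.Ioi 0) ∧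
    ∫ x in Set.Ioi (0:ℝ), x ^ i * PhiR r ν0 ν (-a) x =
      (∏ l, ((ν l + i).factorial : ℝ)) * (Real.exp a * (pI ν0 i).eval a) := by
  set F : ℝ → (Fin r → ℝ) → ℝ := fun x t => wt r ν t * (x ^ i * KK ν0 a (x / ∏ l, t l)) with hF
  set M : ℝ := ν0.factorial * (Real.exp a * (pI ν0 i).eval a) with hM
  have hprod : ∀ t ∈ posOrth r, 0 < ∏ l, t l := fun t ht => Finset.prod_pos fun l _ => ht l
  have hwt : ∀ t ∈ posOrth r, 0 ≤ wt r ν t := fun t ht => Finset.prod_nonneg fun l _ =>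
    mul_nonneg (Real.rpow_nonneg (ht l).le _) (Real.exp_pos _).le
  have hint : ∀ t ∈ posOrth r, ∫ x in Set.Ioi (0:ℝ), F x t =
      wt r ν t * (∏ l, t l) ^ (i + 1) * M := by
    intro t ht
    simp only [hF]
    rw [integral_const_mul, (scale_moment ν0 i ha (hprod t ht)).2]
    ring
  have hmeas : Measurable (Function.uncurry F) := by
    simp only [hF, Function.uncurry_def]
    have h1 : Measurable fun p : ℝ × (Fin r → ℝ) => wt r ν p.2 :=
      (measurable_wt r ν).comp measurable_snd
    have h2 : Measurable fun p : ℝ × (Fin r → ℝ) => KK ν0 a (p.1 / ∏ l, p.2 l) :=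
      (measurable_KK ν0 a).comp (by fun_prop)
    fun_prop
  have hI : Integrable (Function.uncurry F)
      ((volume.restrict (Set.Ioi (0:ℝ))).prod (volume.restrict (posOrth r))) := by
    rw [integrable_prod_iff' hmeas.aestronglyMeasurable]
    refine ⟨?_, ?_⟩
    · filter_upwards [ae_restrict_mem (measurableSet_posOrth r)] with t ht
      exact (scale_moment ν0 i ha (hprod t ht)).1.const_mul (wt r ν t)
    · have := (wt_moment r ν i).1.mul_const M
      refine this.congr ?_
      filter_upwards [ae_restrict_mem (measurableSet_posOrth r)] with t ht
      rw [← hint t ht]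
      refine setIntegral_congr_fun measurableSet_Ioi fun x hx => ?_
      have hx : 0 < x := hx
      simp only [Function.uncurry, hF]
      rw [Real.norm_of_nonneg]
      have := KK_nonneg ν0 ha (div_pos hx (hprod t ht))
      have := hwt t ht
      positivity
  have e : ∀ x, x ^ i * PhiR r ν0 ν (-a) x =
      (1 / (ν0.factorial : ℝ)) * ∫ t in posOrth r, F x t := by
    intro x
    rw [PhiR_eq, mul_left_comm, ← integral_const_mul]
    congr 2
    funext t
    simp only [hF]; ring
  simp_rw [e]
  refine ⟨hI.integral_prod_left.const_mul _, ?_⟩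
  rw [integral_const_mul, integral_integral_swap hI,
    setIntegral_congr_fun (measurableSet_posOrth r) hint, integral_mul_const,
    (wt_moment r ν i).2, hM]
  field_simp

lemma vandermonde_remove {R : Type*} [CommRing R] {n : ℕ} (a : Fin (n + 1) → R) (j : Fin (n + 1)) :
    (Matrix.vandermonde a).det = (-1) ^ (j : ℕ) * (∏ l, (a (j.succAbove l) - a j)) *
      (Matrix.vandermonde (a ∘ j.succAbove)).det := by
  have h1 := Matrix.det_permute (j.cycleRange.symm) (Matrix.vandermonde a)
  have h2 : (Matrix.vandermonde a).submatrix j.cycleRange.symm id =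
      Matrix.vandermonde (a ∘ j.cycleRange.symm) := by
    ext i k; simp [Matrix.vandermonde]
  rw [h2, Matrix.det_vandermonde, Fin.prod_univ_succ, Fin.prod_Ioi_zero] at h1
  simp only [Fin.prod_Ioi_succ, Function.comp_apply, Fin.cycleRange_symm_zero,
    Fin.cycleRange_symm_succ, Equiv.Perm.sign_symm, Fin.sign_cycleRange] at h1
  rw [mul_assoc, Matrix.det_vandermonde (a ∘ j.succAbove)]
  simp only [Function.comp_apply]
  rw [h1, ← mul_assoc]
  push_cast
  rw [← mul_pow]; simp

lemma andreief (N : ℕ) (μ : Measure ℝ) [SigmaFinite μ] (f ξ : Fin N → ℝ → ℂ)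
    (h : ∀ i j, Integrable (fun x => f i x * ξ j x) μ) :
    ∫ x : Fin N → ℝ, (Matrix.of fun i j => f i (x j)).det * (Matrix.of fun i j => ξ i (x j)).det
      ∂(Measure.pi fun _ => μ) =
    N.factorial * (Matrix.of fun i j => ∫ x, f i x * ξ j x ∂μ).det := by
  have e : ∀ x : Fin N → ℝ,
      (Matrix.of fun i j => f i (x j)).det * (Matrix.of fun i j => ξ i (x j)).det =
      ∑ τ : Equiv.Perm (Fin N), ∑ σ : Equiv.Perm (Fin N),
        ((Equiv.Perm.sign σ : ℤ) : ℂ) * ((Equiv.Perm.sign τ : ℤ) : ℂ) *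
          ∏ j, (f (σ j) (x j) * ξ (τ j) (x j)) := by
    intro x
    rw [Matrix.det_apply', Matrix.det_apply', Finset.sum_mul_sum, Finset.sum_comm]
    refine Finset.sum_congr rfl fun τ _ => Finset.sum_congr rfl fun σ _ => ?_
    rw [Finset.prod_mul_distrib]
    simp only [Matrix.of_apply]
    ring
  have hint : ∀ σ τ : Equiv.Perm (Fin N), Integrable (fun x : Fin N → ℝ =>
      ((Equiv.Perm.sign σ : ℤ) : ℂ) * ((Equiv.Perm.sign τ : ℤ) : ℂ) *
          ∏ j, (f (σ j) (x j) * ξ (τ j) (x j))) (Measure.pi fun _ => μ) := fun σ τ =>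
    (Integrable.fintype_prod (f := fun j x => f (σ j) x * ξ (τ j) x)
      fun j => h _ _).const_mul _
  simp_rw [e]
  rw [integral_finsetSum _ fun τ _ => integrable_finsetSum _ fun σ _ => hint σ τ]
  have key : ∀ τ : Equiv.Perm (Fin N), ∫ x : Fin N → ℝ, ∑ σ : Equiv.Perm (Fin N),
        ((Equiv.Perm.sign σ : ℤ) : ℂ) * ((Equiv.Perm.sign τ : ℤ) : ℂ) *
          ∏ j, (f (σ j) (x j) * ξ (τ j) (x j)) ∂(Measure.pi fun _ => μ) =
      (Matrix.of fun i j => ∫ x, f i x * ξ j x ∂μ).det := by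
    intro τ
    rw [integral_finsetSum _ fun σ _ => hint σ τ]
    have h1 := Matrix.det_permute' τ (Matrix.of fun i j => ∫ x, f i x * ξ j x ∂μ)
    have h2 : ((Equiv.Perm.sign τ : ℤ) : ℂ) * ((Equiv.Perm.sign τ : ℤ) : ℂ) = 1 := by
      rw [← Int.cast_mul, ← Units.val_mul, Int.units_mul_self]; simp
    calc _ = ((Equiv.Perm.sign τ : ℤ) : ℂ) *
          ((Matrix.of fun i j => ∫ x, f i x * ξ j x ∂μ).submatrix id τ).det := by
          rw [Matrix.det_apply', Finset.mul_sum]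
          refine Finset.sum_congr rfl fun σ _ => ?_
          rw [integral_const_mul,
            integral_fintype_prod_eq_prod (fun j x => f (σ j) x * ξ (τ j) x)]
          simp only [Matrix.submatrix_apply, Matrix.of_apply, id]
          ring
      _ = _ := by rw [h1, ← mul_assoc, h2, one_mul]
  simp_rw [key]
  simp [Fintype.card_perm]

/-- determinant of a matrix `c i * (e j * p i (a j))` -/
lemma det_poly (n : ℕ) (ν0 : ℕ) (c : ℕ → ℝ) (b a : Fin n → ℝ) :
    (Matrix.of fun i j : Fin n => c i * (b j * (pI ν0 i).eval (a j))).det =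
      (∏ i : Fin n, c i) * ((∏ j, b j) * (Matrix.vandermonde a).det) := by
  have h1 := Matrix.det_mul_column (fun i : Fin n => c i)
    (Matrix.of fun i j : Fin n => b j * (pI ν0 i).eval (a j))
  have h2 := Matrix.det_mul_row b (Matrix.of fun i j : Fin n => (pI ν0 i).eval (a j))
  have h3 := Matrix.det_eval_matrixOfPolynomials_eq_det_vandermonde a (fun i => pI ν0 i)
    (fun i => pI_natDegree ν0 i) (fun i => pI_monic ν0 i)
  rw [← Matrix.det_transpose (Matrix.of _)] at h3
  simp only [Matrix.of_apply] at h1 h2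
  rw [h1, h2, h3]
  rfl

/-- the algebraic heart -/
lemma det_ratio (n ν0 : ℕ) (c : ℕ → ℝ) (hc : ∀ i, c i ≠ 0) (a : Fin (n + 1) → ℝ)
    (ha : Function.Injective a) (g : Matrix (Fin (n + 1)) (Fin (n + 1)) ℝ)
    (hg : ∀ i j, g i j = c i * (Real.exp (a j) * (pI ν0 i).eval (a j)))
    (H : Matrix (Fin (n + 1)) (Fin (n + 1)) ℂ) (z : ℂ)
    (hH : ∀ (i : Fin n) (j), H i.succ j = -(g i.castSucc j : ℂ) + z * H i.castSucc j) :
    H.det / (g.det : ℂ) = (-1) ^ n / (c n : ℂ) *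
      ∑ j, H 0 j * ((Real.exp (-(a j)) * ∏ l ∈ Finset.univ.erase j, (a l - a j)⁻¹ : ℝ) : ℂ) := by
  have hV : (Matrix.vandermonde a).det ≠ 0 := Matrix.det_vandermonde_ne_zero_iff.2 ha
  have hdet : g.det = (∏ i : Fin (n + 1), c i) *
      ((∏ j, Real.exp (a j)) * (Matrix.vandermonde a).det) := by
    rw [← det_poly]; congr 1; ext i j; exact hg i j
  set B : Matrix (Fin (n + 1)) (Fin (n + 1)) ℂ :=
    Matrix.of (Fin.cons (H 0) fun (i : Fin n) j => -(g i.castSucc j : ℂ)) with hB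
  have h1 : H.det = B.det := by
    refine Matrix.det_eq_of_forall_row_eq_smul_add_pred (fun _ => z) (fun j => ?_) fun i j => ?_
    · simp [hB]
    · simp [hB, hH]
  have h2 : ∀ j : Fin (n + 1), (B.submatrix Fin.succ j.succAbove).det = (-1) ^ n *
      (((∏ i : Fin n, c i) * ((∏ l, Real.exp (a (j.succAbove l))) *
        (Matrix.vandermonde (a ∘ j.succAbove)).det) : ℝ) : ℂ) := by
    intro j
    rw [← det_poly n ν0 c (fun l => Real.exp (a (j.succAbove l))) (a ∘ j.succAbove)]
    have : B.submatrix Fin.succ j.succAbove = -((Matrix.of fun i l : Fin n =>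
        c i * (Real.exp (a (j.succAbove l)) *
          (pI ν0 i).eval ((a ∘ j.succAbove) l))).map Complex.ofRealHom) := by
      ext i l
      simp [hB, hg]
    rw [this, Matrix.det_neg, Fintype.card_fin, ← RingHom.mapMatrix_apply, ← RingHom.map_det]
    rfl
  rw [h1, Matrix.det_succ_row_zero, Finset.sum_div, Finset.mul_sum]
  refine Finset.sum_congr rfl fun j _ => ?_
  rw [h2 j, hdet, vandermonde_remove a j]
  have hB0 : B 0 j = H 0 j := by simp [hB]
  rw [vandermonde_remove a j] at hV
  have e1 : ∏ l ∈ Finset.univ.erase j, (a l - a j)⁻¹ = (∏ l, (a (j.succAbove l) - a j))⁻¹ := by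
    rw [← Finset.prod_inv_distrib]
    have := Finset.prod_map (Finset.univ : Finset (Fin n)) j.succAboveEmb
      (fun l => (a l - a j)⁻¹)
    rw [Fin.coe_succAboveEmb] at this
    rw [← this]
    congr 1
    ext l
    simp [Fin.exists_succAbove_eq_iff]
  rw [hB0, e1, Fin.prod_univ_castSucc (fun i : Fin (n + 1) => c i),
    Fin.prod_univ_succAbove (fun l => Real.exp (a l)) j, Real.exp_neg]
  simp only [Fin.val_castSucc, Fin.val_last]
  have hp : (∏ i : Fin n, c i) ≠ 0 := Finset.prod_ne_zero_iff.2 fun i _ => hc i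
  have hE : (∏ l : Fin n, Real.exp (a (j.succAbove l))) ≠ 0 :=
    Finset.prod_ne_zero_iff.2 fun i _ => (Real.exp_pos _).ne'
  have hD : ∏ l, (a (j.succAbove l) - a j) ≠ 0 := fun h => hV (by rw [h]; ring)
  have hW : (Matrix.vandermonde (a ∘ j.succAbove)).det ≠ 0 := fun h => hV (by rw [h]; ring)
  have he := (Real.exp_pos (a j)).ne'
  have hcn := hc n
  generalize (∏ i : Fin n, c i) = p at *
  generalize (∏ l : Fin n, Real.exp (a (j.succAbove l))) = E at *
  generalize ∏ l, (a (j.succAbove l) - a j) = D at *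
  generalize (Matrix.vandermonde (a ∘ j.succAbove)).det = W at *
  generalize Real.exp (a j) = e at *
  generalize c n = cn at *
  push_cast
  have hp : (p : ℂ) ≠ 0 := by exact_mod_cast hp
  have hE : (E : ℂ) ≠ 0 := by exact_mod_cast hE
  have hD : (D : ℂ) ≠ 0 := by exact_mod_cast hD
  have hW : (W : ℂ) ≠ 0 := by exact_mod_cast hW
  have he : (e : ℂ) ≠ 0 := by exact_mod_cast he
  have hcn : (cn : ℂ) ≠ 0 := by exact_mod_cast hcn
  field_simp

/-- **Proposition 2.6(ii)** (average reciprocal characteristic polynomial for the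
product ensemble, residue form). -/
theorem prop_2_6_ii (r ν0 N : ℕ) (hN : 0 < N) (ν : Fin r → ℕ) (a : Fin N → ℝ)
    (ha : ∀ j, 0 < a j) (hdist : Function.Injective a)
    (g : Matrix (Fin N) (Fin N) ℝ)
    (hg : ∀ i j, g i j = ∫ x in Set.Ioi (0 : ℝ), x ^ (i : ℕ) * PhiR r ν0 ν (-(a j)) x)
    (hdet : g.det ≠ 0)
    (P : (Fin N → ℝ) → ℝ)
    (hP : ∀ x, P x = (1 / ((Nat.factorial N : ℝ) * g.det)) *
      (Matrix.of fun i j : Fin N => x j ^ (i : ℕ)).det *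
      (Matrix.of fun i j : Fin N => PhiR r ν0 ν (-(a i)) (x j)).det)
    (z : ℂ) (hz : z.im ≠ 0) :
    ∫ x in {x : Fin N → ℝ | ∀ l, 0 < x l},
        (∏ l, (z - (x l : ℂ))⁻¹) * ((P x : ℝ) : ℂ) =
      ((-1 : ℂ) ^ (N - 1) / ∏ l, (Real.Gamma ((ν l : ℝ) + N) : ℂ)) *
        ∫ t in Set.Ioi (0 : ℝ), (z - (t : ℂ))⁻¹ *
          ((∑ j, Real.exp (-(a j)) * PhiR r ν0 ν (-(a j)) t *
            ∏ l ∈ Finset.univ.erase j, (a l - a j)⁻¹ : ℝ) : ℂ) := by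
  obtain ⟨n, rfl⟩ : ∃ n, N = n + 1 := ⟨N - 1, by omega⟩
  set c : ℕ → ℝ := fun i => ∏ l, ((ν l + i).factorial : ℝ) with hcdef
  have hc : ∀ i, c i ≠ 0 := fun i => Finset.prod_ne_zero_iff.2 fun l _ => by positivity
  set f : Fin (n + 1) → ℝ → ℂ := fun i x => (z - (x : ℂ))⁻¹ * (x : ℂ) ^ (i : ℕ) with hf
  set ξ : Fin (n + 1) → ℝ → ℂ := fun j x => (PhiR r ν0 ν (-(a j)) x : ℂ) with hξ
  have hne : ∀ x : ℝ, z - (x : ℂ) ≠ 0 := by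
    intro x hx
    apply hz
    have := congrArg Complex.im hx
    simpa using this
  have hmom : ∀ (i : ℕ) (j : Fin (n + 1)), Integrable (fun x : ℝ => (x : ℂ) ^ i * ξ j x)
      (volume.restrict (Set.Ioi (0 : ℝ))) := by
    intro i j
    have := (PhiR_moment r ν0 ν i (ha j)).1.ofReal (𝕜 := ℂ)
    refine this.congr (Filter.Eventually.of_forall fun x => ?_)
    simp [hξ]
  have hfx : ∀ i j, Integrable (fun x => f i x * ξ j x)
      (volume.restrict (Set.Ioi (0 : ℝ))) := by
    intro i j
    have := (hmom i j).bdd_mul (f := fun x : ℝ => (z - (x : ℂ))⁻¹) (c := |z.im|⁻¹)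
      (Measurable.aestronglyMeasurable (by fun_prop)) (Filter.Eventually.of_forall fun x => ?_)
    · refine this.congr (Filter.Eventually.of_forall fun x => ?_)
      simp only [hf]; ring
    · rw [norm_inv]
      refine inv_anti₀ (abs_pos.2 hz) ?_
      have := Complex.abs_im_le_norm (z - (x : ℂ))
      simpa using this
  set H : Matrix (Fin (n + 1)) (Fin (n + 1)) ℂ :=
    Matrix.of fun i j => ∫ x in Set.Ioi (0 : ℝ), f i x * ξ j x with hHdef
  have hgc : ∀ i j, (g i j : ℂ) = ∫ x in Set.Ioi (0 : ℝ), (x : ℂ) ^ (i : ℕ) * ξ j x := by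
    intro i j
    rw [hg, ← integral_complex_ofReal]
    refine integral_congr_ae (Filter.Eventually.of_forall fun x => ?_)
    simp [hξ]
  have hH : ∀ (i : Fin n) (j), H i.succ j = -(g i.castSucc j : ℂ) + z * H i.castSucc j := by
    intro i j
    simp only [hHdef, Matrix.of_apply]
    rw [hgc, ← integral_const_mul, neg_add_eq_sub,
      ← integral_sub ((hfx _ _).const_mul z) (hmom _ _)]
    refine integral_congr_ae (Filter.Eventually.of_forall fun x => ?_)
    simp only [hf, Fin.val_succ, Fin.val_castSucc]
    have := hne x
    field_simp
    ring
  have hratio := det_ratio n ν0 c hc a hdist g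
    (fun i j => by rw [hg, (PhiR_moment r ν0 ν i (ha j)).2]) H z hH
  have hA := andreief (n + 1) (volume.restrict (Set.Ioi (0 : ℝ))) f ξ hfx
  rw [← orth_restrict] at hA
  have hL : ∀ x : Fin (n + 1) → ℝ, (∏ l, (z - (x l : ℂ))⁻¹) * ((P x : ℝ) : ℂ) =
      (1 / (((n + 1).factorial : ℂ) * (g.det : ℂ))) *
      ((Matrix.of fun i j => f i (x j)).det * (Matrix.of fun i j => ξ i (x j)).det) := by
    intro x
    have h1 := Matrix.det_mul_row (fun j => (z - (x j : ℂ))⁻¹)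
      (Matrix.of fun i j : Fin (n + 1) => (x j : ℂ) ^ (i : ℕ))
    simp only [Matrix.of_apply] at h1
    have h2 : ((Matrix.of fun i j : Fin (n + 1) => x j ^ (i : ℕ)).det : ℂ) =
        (Matrix.of fun i j : Fin (n + 1) => (x j : ℂ) ^ (i : ℕ)).det := by
      rw [← Complex.ofRealHom_eq_coe, RingHom.map_det]
      congr 1
      ext i j; simp
    have h3 : ((Matrix.of fun i j : Fin (n + 1) => PhiR r ν0 ν (-(a i)) (x j)).det : ℂ) =
        (Matrix.of fun i j => ξ i (x j)).det := by
      rw [← Complex.ofRealHom_eq_coe, RingHom.map_det]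
      congr 1
    simp only [hf]
    rw [h1, hP]
    push_cast
    rw [h2, h3]
    ring
  have hgd : (g.det : ℂ) ≠ 0 := by exact_mod_cast hdet
  have hfac : ((n + 1).factorial : ℂ) ≠ 0 := by exact_mod_cast (n + 1).factorial_ne_zero
  simp_rw [hL]
  rw [integral_const_mul, hA]
  have e1 : 1 / (((n + 1).factorial : ℂ) * (g.det : ℂ)) * (((n + 1).factorial : ℂ) * H.det) =
      H.det / (g.det : ℂ) := by field_simp
  rw [e1, hratio, Nat.add_sub_cancel]
  have e2 : ∏ l, (Real.Gamma ((ν l : ℝ) + ((n + 1 : ℕ) : ℝ)) : ℂ) = (c n : ℂ) := by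
    simp only [hcdef]
    push_cast
    refine Finset.prod_congr rfl fun l _ => ?_
    have := Gamma_nat_aux (ν l) n
    rw [show (ν l : ℝ) + (n + 1) = ν l + 1 + n by ring, this]
    simp
  rw [e2]
  congr 1
  have e3 : ∀ t : ℝ, (z - (t : ℂ))⁻¹ *
          ((∑ j, Real.exp (-(a j)) * PhiR r ν0 ν (-(a j)) t *
            ∏ l ∈ Finset.univ.erase j, (a l - a j)⁻¹ : ℝ) : ℂ) =
      ∑ j, f 0 t * ξ j t *
        ((Real.exp (-(a j)) * ∏ l ∈ Finset.univ.erase j, (a l - a j)⁻¹ : ℝ) : ℂ) := by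
    intro t
    rw [Complex.ofReal_sum, Finset.mul_sum]
    refine Finset.sum_congr rfl fun j _ => ?_
    simp only [hf, hξ, Fin.val_zero, pow_zero]
    push_cast
    ring
  simp_rw [e3]
  rw [integral_finsetSum _ fun j _ => (hfx 0 j).mul_const _]
  refine Finset.sum_congr rfl fun j _ => ?_
  rw [integral_mul_const]
  rfl

end
end
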